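/- The field extension ℚ^cyc(j(S)) / ℚ^cyc is abelian, where j(S) is the set of all singular moduli (j-invariants of CM points of the upper half plane) and ℚ^cyc = ℚ(all roots of unity). -/

import Mathlib

set_option synthInstance.maxHeartbeats 800000
set_option maxHeartbeats 1600000
noncomputable section
open UpperHalfPlane Matrix MatrixGroups Classical

namespace JPaper

/-! ### The group `G = GL₂⁺(ℚ)` modulo scalars and its action on `ℍ` -/

/-- `GL₂⁺(ℚ)`, the group of 2×2 rational matrices with positive determinant. -/
abbrev GL2QPos : Type := Matrix.GLPos (Fin 2) ℚ

lemma map_mem_glpos (g : GL2QPos) :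
    (Matrix.GeneralLinearGroup.map (algebraMap ℚ ℝ) : GL (Fin 2) ℚ →* GL (Fin 2) ℝ) g ∈
      Matrix.GLPos (Fin 2) ℝ := by
  have hg := g.2
  rw [Matrix.mem_glpos] at hg ⊢
  rw [Matrix.GeneralLinearGroup.val_det_apply] at hg ⊢
  show (0:ℝ) < Matrix.det _
  have : ((Matrix.GeneralLinearGroup.map (algebraMap ℚ ℝ) (g : GL (Fin 2) ℚ) :
      GL (Fin 2) ℝ) : Matrix (Fin 2) (Fin 2) ℝ) = ((g : GL (Fin 2) ℚ) :
      Matrix (Fin 2) (Fin 2) ℚ).map (algebraMap ℚ ℝ) := rfl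
  rw [this, ← RingHom.mapMatrix_apply, ← RingHom.map_det]
  simpa using (Rat.cast_pos (K := ℝ)).mpr hg

/-- The homomorphism `GL₂⁺(ℚ) →* GL₂⁺(ℝ)` induced by `ℚ ⊆ ℝ`. -/
def toGLPosR : GL2QPos →* Matrix.GLPos (Fin 2) ℝ :=
  MonoidHom.codRestrict
    ((Matrix.GeneralLinearGroup.map (algebraMap ℚ ℝ)).comp (Matrix.GLPos (Fin 2) ℚ).subtype)
    (Matrix.GLPos (Fin 2) ℝ) (fun g => map_mem_glpos g)

/-- `G := GL₂⁺(ℚ)ᵃᵈ`, i.e. `GL₂⁺(ℚ)` modulo its centre (the scalar matrices). -/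
abbrev GQ : Type := GL2QPos ⧸ Subgroup.center GL2QPos

/-- The action of an element of `G = GL₂⁺(ℚ)` modulo scalars on the upper half plane,
via a choice of representative (the centre acts trivially on `ℍ`, so this recovers the
natural action by Möbius transformations). -/
def gqSmul (g : GQ) (τ : ℍ) : ℍ := toGLPosR g.out • τ

/-- The image of `SL₂(ℤ)` in `GL₂⁺(ℚ)`. -/
def sl2ZtoGLQ (γ : Matrix.SpecialLinearGroup (Fin 2) ℤ) : GL2QPos :=
  ⟨Matrix.SpecialLinearGroup.toGL
      (Matrix.SpecialLinearGroup.map (Int.castRingHom ℚ) γ), by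
    rw [Matrix.mem_glpos, Matrix.GeneralLinearGroup.val_det_apply]
    show (0:ℚ) < Matrix.det _
    have : ((Matrix.SpecialLinearGroup.toGL
        (Matrix.SpecialLinearGroup.map (Int.castRingHom ℚ) γ) : GL (Fin 2) ℚ) :
        Matrix (Fin 2) (Fin 2) ℚ).det = 1 :=
      (Matrix.SpecialLinearGroup.map (Int.castRingHom ℚ) γ).2
    rw [this]; norm_num⟩

/-- The image of `SL₂(ℤ)` in `G = GL₂⁺(ℚ)` modulo scalars. -/
def sl2ZtoGQ (γ : Matrix.SpecialLinearGroup (Fin 2) ℤ) : GQ :=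
  QuotientGroup.mk (sl2ZtoGLQ γ)

/-! ### The modular `j`-function and special points -/

/-- The classical modular `j`-function on the upper half plane, defined via the
Eisenstein series `g₂, g₃` of the lattice `ℤτ + ℤ`. -/
def jFunction (τ : ℍ) : ℂ :=
  let g2 : ℂ := 60 * ∑' p : ℤ × ℤ,
    if p = 0 then 0 else (((p.1 : ℂ) * (τ : ℂ) + (p.2 : ℂ)) ^ 4)⁻¹
  let g3 : ℂ := 140 * ∑' p : ℤ × ℤ,
    if p = 0 then 0 else (((p.1 : ℂ) * (τ : ℂ) + (p.2 : ℂ)) ^ 6)⁻¹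
  1728 * g2 ^ 3 / (g2 ^ 3 - 27 * g3 ^ 2)

/-- A point of `ℍ` is special (a CM point) if it is fixed by some nontrivial element
of `G = GL₂⁺(ℚ)` modulo scalars. -/
def IsSpecial (τ : ℍ) : Prop := ∃ g : GQ, g ≠ 1 ∧ gqSmul g τ = τ

/-- The set of special points of `ℍ`. -/
def SpecialSet : Set ℍ := {τ | IsSpecial τ}

/-- The set `j(S) ⊆ ℂ` of singular moduli, i.e. `j`-values of special points. -/
def jSpecialValues : Set ℂ := jFunction '' SpecialSet

/-- The subfield `ℚ(j(S))` of `ℂ` generated by the singular moduli. -/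
def QjS : Subfield ℂ := Subfield.closure jSpecialValues

/-- An integral matrix is primitive if the gcd of its entries is 1. -/
def IsPrimitiveIntMatrix (A : Matrix (Fin 2) (Fin 2) ℤ) : Prop :=
  Int.gcd (Int.gcd (A 0 0) (A 0 1)) (Int.gcd (A 1 0) (A 1 1)) = 1

/-- `G_N`: the set of elements of `G` which, after multiplying through by an integer to
clear denominators in all entries, have determinant `N`. -/
def GQdet (N : ℕ) : Set GQ :=
  {g | ∃ A : Matrix (Fin 2) (Fin 2) ℤ, IsPrimitiveIntMatrix A ∧ A.det = (N : ℤ) ∧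
    ∃ c : ℚ, ((g.out : GL (Fin 2) ℚ) : Matrix (Fin 2) (Fin 2) ℚ) =
      c • A.map (fun x => (x : ℚ))}

/-- The `N`-th classical modular polynomial `Φ_N ∈ ℤ[X,Y]`, characterised by the property
that `Φ_N(z,w) = 0` iff `z` and `w` are the `j`-invariants of elliptic curves related by a
cyclic `N`-isogeny, i.e. iff `w = j(gτ)`, `z = j(τ)` for some `τ ∈ ℍ` and `g ∈ G_N`. -/
def modularPoly (N : ℕ) : MvPolynomial (Fin 2) ℤ :=
  if h : ∃ P : MvPolynomial (Fin 2) ℤ, P ≠ 0 ∧ ∀ z w : ℂ,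
      (MvPolynomial.aeval ![z, w]) P = 0 ↔
        ∃ (τ : ℍ) (g : GQ), g ∈ GQdet N ∧ jFunction τ = z ∧ jFunction (gqSmul g τ) = w
  then h.choose else 0


/-- The set of all roots of unity in `ℂ`. -/
def rootsOfUnitySet : Set ℂ := {z | ∃ n : ℕ, 0 < n ∧ z ^ n = 1}

/-- `ℚ^cyc`, the subfield of `ℂ` generated by all roots of unity. -/
def Qcyc : Subfield ℂ := Subfield.closure rootsOfUnitySet

/-- `ℚ^cyc(j(S))`, the subfield of `ℂ` generated by all roots of unity together with all
singular moduli. -/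
def QcycJS : Subfield ℂ := Subfield.closure (rootsOfUnitySet ∪ jSpecialValues)

lemma Qcyc_le_QcycJS : Qcyc ≤ QcycJS :=
  Subfield.closure_mono Set.subset_union_left

noncomputable instance : Algebra ↥Qcyc ↥QcycJS :=
  (Subfield.inclusion Qcyc_le_QcycJS).toAlgebra

end JPaper

namespace SingularModuli

open Filter Topology Polynomial
open scoped PeriodPair

/-! ### Taylor series at the origin -/

/-- `p` is the Taylor series at `0` of the function `f`, and it converges to `f` near `0`. -/
def HasTaylorSeries (f : ℂ → ℂ) (p : PowerSeries ℂ) : Prop :=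
  ∀ᶠ z in 𝓝 (0 : ℂ), HasSum (fun n => p.coeff n * z ^ n) (f z)

namespace HasTaylorSeries

variable {f g : ℂ → ℂ} {p q : PowerSeries ℂ}

lemma hasFPowerSeriesAt (h : HasTaylorSeries f p) :
    HasFPowerSeriesAt f (.ofScalars ℂ fun n => p.coeff n) 0 := by
  rw [hasFPowerSeriesAt_iff']
  filter_upwards [h] with z hz
  simpa [FormalMultilinearSeries.coeff_ofScalars, mul_comm] using hz

lemma of_hasFPowerSeriesAt {c : ℕ → ℂ} (h : HasFPowerSeriesAt f (.ofScalars ℂ c) 0) :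
    HasTaylorSeries f (PowerSeries.mk c) := by
  rw [hasFPowerSeriesAt_iff'] at h
  filter_upwards [h] with z hz
  simpa [FormalMultilinearSeries.coeff_ofScalars, mul_comm] using hz

lemma congr (h : HasTaylorSeries f p) (hfg : f =ᶠ[𝓝 0] g) : HasTaylorSeries g p := by
  filter_upwards [h, hfg] with z hz hz'
  rwa [← hz']

lemma unique (hp : HasTaylorSeries f p) (hq : HasTaylorSeries f q) : p = q := by
  have h := hp.hasFPowerSeriesAt.eq_formalMultilinearSeries hq.hasFPowerSeriesAt
  ext n
  simpa [FormalMultilinearSeries.coeff_ofScalars] using congrArg (fun s => s.coeff n) h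

lemma eventuallyEq (hf : HasTaylorSeries f p) (hg : HasTaylorSeries g p) : f =ᶠ[𝓝 0] g := by
  filter_upwards [hf, hg] with z hz hz' using hz.unique hz'

lemma add (hf : HasTaylorSeries f p) (hg : HasTaylorSeries g q) :
    HasTaylorSeries (fun z => f z + g z) (p + q) := by
  filter_upwards [hf, hg] with z hz hz'
  simpa [add_mul] using hz.add hz'

lemma mul (hf : HasTaylorSeries f p) (hg : HasTaylorSeries g q) :
    HasTaylorSeries (fun z => f z * g z) (p * q) := by
  filter_upwards [hf, hg] with z hz hz'
  have hs := hz.summable.norm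
  have hs' := hz'.summable.norm
  have key : (fun n => (p * q).coeff n * z ^ n) = fun n =>
      ∑ kl ∈ Finset.HasAntidiagonal.antidiagonal n, (p.coeff kl.1 * z ^ kl.1) * (q.coeff kl.2 * z ^ kl.2) := by
    ext n
    rw [PowerSeries.coeff_mul, Finset.sum_mul]
    refine Finset.sum_congr rfl fun kl hkl => ?_
    rw [← Finset.HasAntidiagonal.mem_antidiagonal.mp hkl, pow_add]
    ring
  rw [key, ← hz.tsum_eq, ← hz'.tsum_eq,
    tsum_mul_tsum_eq_tsum_sum_antidiagonal_of_summable_norm hs hs']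
  exact (summable_norm_sum_mul_antidiagonal_of_summable_norm hs hs').of_norm.hasSum

lemma const (c : ℂ) : HasTaylorSeries (fun _ => c) (PowerSeries.C c) := by
  refine Eventually.of_forall fun z => ?_
  convert hasSum_single (f := fun n => (PowerSeries.C c).coeff n * z ^ n) 0 ?_ using 1
  · simp
  · intro n hn
    simp [PowerSeries.coeff_C, hn]

lemma X_pow (k : ℕ) : HasTaylorSeries (fun z => z ^ k) (PowerSeries.X ^ k) := by
  refine Eventually.of_forall fun z => ?_
  convert hasSum_single (f := fun n => ((PowerSeries.X : PowerSeries ℂ) ^ k).coeff n * z ^ n) k ?_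
    using 1
  · simp [PowerSeries.coeff_X_pow]
  · intro n hn
    simp [PowerSeries.coeff_X_pow, hn]

lemma pow (hf : HasTaylorSeries f p) (k : ℕ) : HasTaylorSeries (fun z => f z ^ k) (p ^ k) := by
  induction k with
  | zero => simpa using const 1
  | succ k ih => simpa [pow_succ] using ih.mul hf

lemma sum {ι : Type*} (s : Finset ι) {F : ι → ℂ → ℂ} {P : ι → PowerSeries ℂ}
    (h : ∀ i ∈ s, HasTaylorSeries (F i) (P i)) :
    HasTaylorSeries (fun z => ∑ i ∈ s, F i z) (∑ i ∈ s, P i) := by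
  induction s using Finset.induction_on with
  | empty => simpa using const 0
  | insert a s ha ih =>
    simp only [Finset.sum_insert ha]
    exact (h a (by simp)).add (ih fun i hi => h i (by simp [hi]))

end HasTaylorSeries

/-! ### The formal differential equation of the Weierstrass function -/

/-- The differential equation satisfied by the regular part `p` of a formal solution
`X⁻² + p` of `(y')² = 4 y³ - a y - b`, cleared of denominators. -/
def WeierstrassODE (a b : ℂ) (p : PowerSeries ℂ) : Prop :=
  (PowerSeries.X ^ 3 * PowerSeries.derivative ℂ p + PowerSeries.C (-2)) ^ 2 =
    PowerSeries.C 4 * (PowerSeries.C 1 + PowerSeries.X ^ 2 * p) ^ 3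
      + PowerSeries.C (-a) * (PowerSeries.X ^ 4 * (PowerSeries.C 1 + PowerSeries.X ^ 2 * p))
      + PowerSeries.C (-b) * PowerSeries.X ^ 6

lemma WeierstrassODE.map {a b : ℂ} {p : PowerSeries ℂ} (h : WeierstrassODE a b p)
    (σ : ℂ →+* ℂ) : WeierstrassODE (σ a) (σ b) (p.map σ) := by
  have hd : (PowerSeries.derivative ℂ p).map σ = PowerSeries.derivative ℂ (p.map σ) := by
    ext n
    simp [PowerSeries.coeff_derivative]
  have := congrArg (PowerSeries.map σ) h
  simpa [WeierstrassODE, hd, map_ofNat σ 2, map_ofNat σ 4] using this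

lemma WeierstrassODE.unique {a b : ℂ} {p q : PowerSeries ℂ} (hp : WeierstrassODE a b p)
    (hq : WeierstrassODE a b q) : p = q := by
  rw [← sub_eq_zero]
  set d := p - q with hd
  have hpq : p = q + d := by rw [hd]; ring
  suffices h : ∀ n, PowerSeries.X ^ n ∣ d by
    ext n
    simpa using (PowerSeries.X_pow_dvd_iff.mp (h (n + 1))) n (Nat.lt_succ_self n)
  intro n
  induction n with
  | zero => simp
  | succ n ih =>
    obtain ⟨e, he⟩ := ih
    have hder : PowerSeries.X * PowerSeries.derivative ℂ d = PowerSeries.X ^ n *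
        (PowerSeries.C (n : ℂ) * e + PowerSeries.X * PowerSeries.derivative ℂ e) := by
      rw [he, Derivation.leibniz, Derivation.leibniz_pow]
      rcases n with _ | n
      · simp
      · simp [pow_succ]
        ring
    unfold WeierstrassODE at hp hq
    rw [hpq, map_add] at hp
    set q' := PowerSeries.derivative ℂ q
    set d' := PowerSeries.derivative ℂ d
    set X : PowerSeries ℂ := PowerSeries.X
    set w := PowerSeries.C (n : ℂ) * e + X * PowerSeries.derivative ℂ e
    have key : X ^ (n + 2) * (w * (X ^ 3 * (2 * q' + d') + PowerSeries.C (-4))) =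
        X ^ (n + 2) * (e * (PowerSeries.C 4 * ((1 + X ^ 2 * (q + d)) ^ 2 +
          (1 + X ^ 2 * (q + d)) * (1 + X ^ 2 * q) + (1 + X ^ 2 * q) ^ 2)
          + PowerSeries.C (-a) * X ^ 4)) := by
      have h4 : (PowerSeries.C (-4) : PowerSeries ℂ) = PowerSeries.C (-2) * 2 := by
        rw [show (2 : PowerSeries ℂ) = PowerSeries.C 2 from rfl, ← map_mul]; norm_num
      rw [h4]
      simp only [map_one] at hp hq
      linear_combination hp - hq - (X ^ 2 * (X ^ 3 * (2 * q' + d') + PowerSeries.C (-2) * 2)) * hder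
        + X ^ 2 * (PowerSeries.C 4 * ((1 + X ^ 2 * (q + d)) ^ 2 +
          (1 + X ^ 2 * (q + d)) * (1 + X ^ 2 * q) + (1 + X ^ 2 * q) ^ 2)
          + PowerSeries.C (-a) * X ^ 4) * he
    have key' := mul_left_cancel₀ (pow_ne_zero _ PowerSeries.X_ne_zero) key
    have hc := congrArg PowerSeries.constantCoeff key'
    simp [X, w] at hc
    have he0 : PowerSeries.constantCoeff e = 0 := by
      have h1 : ((n : ℂ) + 3) * PowerSeries.constantCoeff e = 0 := by linear_combination -hc / 4
      have h2 : ((n : ℂ) + 3) ≠ 0 := by exact_mod_cast Nat.succ_ne_zero (n + 2)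
      simpa [h2] using h1
    obtain ⟨e', rfl⟩ := PowerSeries.X_dvd_iff.mpr he0
    exact ⟨e', by rw [he, pow_succ]; ring⟩

/-- The regular part of the Laurent series of `℘[L]` at `0`. -/
def regularPart (L : PeriodPair) : PowerSeries ℂ :=
  PowerSeries.mk fun i => if i = 0 then 0 else (i + 1) * L.G (i + 2)

lemma hasTaylorSeries_regularPart (L : PeriodPair) :
    HasTaylorSeries ℘[L - (0 : ℂ)] (regularPart L) := by
  have h := L.hasFPowerSeriesAt_weierstrassPExcept 0
  simp only [PeriodPair.weierstrassPExcept_zero, PeriodPair.sumInvPow_zero] at h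
  exact .of_hasFPowerSeriesAt h

lemma hasTaylorSeries_derivative_regularPart (L : PeriodPair) :
    HasTaylorSeries ℘'[L - (0 : ℂ)] (PowerSeries.derivative ℂ (regularPart L)) := by
  have h := L.hasFPowerSeriesAt_derivWeierstrassPExcept 0
  simp only [PeriodPair.sumInvPow_zero] at h
  convert HasTaylorSeries.of_hasFPowerSeriesAt h using 1
  ext n
  simp [regularPart, PowerSeries.coeff_derivative]
  ring_nf

lemma weierstrassP_eq (L : PeriodPair) (z : ℂ) : ℘[L] z = ℘[L - (0 : ℂ)] z + 1 / z ^ 2 := by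
  have := L.weierstrassPExcept_add 0 z
  simpa using this.symm

lemma derivWeierstrassP_eq (L : PeriodPair) (z : ℂ) :
    ℘'[L] z = ℘'[L - (0 : ℂ)] z - 2 / z ^ 3 := by
  have := L.derivWeierstrassPExcept_sub 0 z
  simpa using this.symm

lemma weierstrassODE_regularPart (L : PeriodPair) :
    WeierstrassODE L.g₂ L.g₃ (regularPart L) := by
  have hp := hasTaylorSeries_regularPart L
  have hp' := hasTaylorSeries_derivative_regularPart L
  refine HasTaylorSeries.unique
    ((((HasTaylorSeries.X_pow 3).mul hp').add (.const (-2))).pow 2) ?_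
  have hu := (HasTaylorSeries.const 1).add ((HasTaylorSeries.X_pow 2).mul hp)
  refine HasTaylorSeries.congr ((((HasTaylorSeries.const 4).mul (hu.pow 3)).add
    ((HasTaylorSeries.const _).mul ((HasTaylorSeries.X_pow 4).mul hu))).add
    ((HasTaylorSeries.const _).mul (HasTaylorSeries.X_pow 6))) ?_
  filter_upwards [L.compl_lattice_sdiff_singleton_mem_nhds 0] with z hz
  by_cases hz0 : z = 0
  · simp [hz0]; norm_num
  have hzL : z ∉ L.lattice := by simp_all
  have h := L.derivWeierstrassP_sq z hzL
  rw [weierstrassP_eq, derivWeierstrassP_eq] at h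
  field_simp at h
  linear_combination -h

lemma map_regularPart (σ : ℂ →+* ℂ) {L M : PeriodPair} (h₂ : M.g₂ = σ L.g₂)
    (h₃ : M.g₃ = σ L.g₃) : (regularPart L).map σ = regularPart M :=
  ((weierstrassODE_regularPart L).map σ).unique (h₂ ▸ h₃ ▸ weierstrassODE_regularPart M)

/-! ### Even elliptic functions are rational functions of `℘` -/

/-- `f` agrees on a punctured neighbourhood of `z₀` with a function analytic at `z₀`. -/
def AnalyticallyExtendsAt (f : ℂ → ℂ) (z₀ : ℂ) : Prop :=
  ∃ g, AnalyticAt ℂ g z₀ ∧ f =ᶠ[𝓝[≠] z₀] g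

lemma _root_.AnalyticAt.analyticallyExtendsAt {f : ℂ → ℂ} {z₀ : ℂ} (hf : AnalyticAt ℂ f z₀) :
    AnalyticallyExtendsAt f z₀ :=
  ⟨f, hf, EventuallyEq.rfl⟩

namespace AnalyticallyExtendsAt

variable {f g : ℂ → ℂ} {z₀ : ℂ}

lemma sub (hf : AnalyticallyExtendsAt f z₀) (hg : AnalyticallyExtendsAt g z₀) :
    AnalyticallyExtendsAt (fun z => f z - g z) z₀ := by
  obtain ⟨F, hF, hfF⟩ := hf
  obtain ⟨G, hG, hgG⟩ := hg
  exact ⟨fun z => F z - G z, hF.fun_sub hG, hfF.sub hgG⟩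

lemma comp_add_const {w : ℂ} (hf : AnalyticallyExtendsAt f (z₀ + w)) :
    AnalyticallyExtendsAt (fun z => f (z + w)) z₀ := by
  obtain ⟨F, hF, hfF⟩ := hf
  refine ⟨fun z => F (z + w), ?_, ?_⟩
  · exact AnalyticAt.fun_comp hF (by fun_prop)
  · have ht : Tendsto (fun z : ℂ => z + w) (𝓝[≠] z₀) (𝓝[≠] (z₀ + w)) := by
      refine tendsto_nhdsWithin_of_tendsto_nhds_of_eventually_within _ ?_ ?_
      · exact (Continuous.tendsto (by fun_prop) z₀).mono_left nhdsWithin_le_nhds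
      · filter_upwards [self_mem_nhdsWithin] with z hz
        simpa using hz
    exact ht.eventually hfF

end AnalyticallyExtendsAt

/-- A doubly periodic function with only removable singularities is constant. -/
lemma exists_eventuallyEq_const (L : PeriodPair) {f : ℂ → ℂ}
    (hper : ∀ z, ∀ l ∈ L.lattice, f (z + l) = f z) (hf : ∀ z, AnalyticallyExtendsAt f z) :
    ∃ c, ∀ᶠ z in 𝓝[≠] (0 : ℂ), f z = c := by
  choose g hg hfg using hf
  set F : ℂ → ℂ := fun z => g z z with hF
  have hlim : ∀ z, Tendsto f (𝓝[≠] z) (𝓝 (F z)) := fun z =>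
    (((hg z).continuousAt.tendsto).mono_left nhdsWithin_le_nhds).congr' (hfg z).symm
  have hFg : ∀ z₀, F =ᶠ[𝓝 z₀] g z₀ := by
    intro z₀
    filter_upwards [eventually_nhds_nhdsWithin.mpr (hfg z₀), (hg z₀).eventually_analyticAt]
      with z hz hz'
    have hz : f =ᶠ[𝓝[≠] z] g z₀ := by
      rcases eq_or_ne z z₀ with rfl | hne
      · exact hz
      · rw [(isOpen_compl_singleton.nhdsWithin_eq hne : 𝓝[{z₀}ᶜ] z = 𝓝 z)] at hz
        exact nhdsWithin_le_nhds hz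
    exact tendsto_nhds_unique (hlim z) (((hz'.continuousAt.tendsto).mono_left
      nhdsWithin_le_nhds).congr' (EventuallyEq.symm hz))
  have hdiff : Differentiable ℂ F := fun z₀ =>
    ((hg z₀).congr (hFg z₀).symm).differentiableAt
  have hperF : ∀ z, ∀ l ∈ L.lattice, F (z + l) = F z := by
    intro z l hl
    have ht : Tendsto (fun z : ℂ => z + l) (𝓝[≠] z) (𝓝[≠] (z + l)) := by
      refine tendsto_nhdsWithin_of_tendsto_nhds_of_eventually_within _ ?_ ?_
      · exact (Continuous.tendsto (by fun_prop) z).mono_left nhdsWithin_le_nhds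
      · filter_upwards [self_mem_nhdsWithin] with w hw
        simpa using hw
    refine tendsto_nhds_unique ((hlim (z + l)).comp ht) ((hlim z).congr fun w => ?_)
    exact (hper w l hl).symm
  refine ⟨F 0, ?_⟩
  have hconst : ∀ z, F z = F 0 := fun z =>
    hdiff.apply_eq_apply_of_bounded (IsZLattice.isCompact_range_of_periodic L.lattice _
      hdiff.continuous fun z w hw => hperF z w hw).isBounded z 0
  filter_upwards [hfg 0, nhdsWithin_le_nhds (hFg 0)] with z hz hz'
  rw [hz, ← hz', hconst]

lemma exists_eq_sq_mul_of_even {h : ℂ → ℂ} (hh : AnalyticAt ℂ h 0) (h0 : h 0 = 0)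
    (heven : ∀ᶠ z in 𝓝 (0 : ℂ), h (-z) = h z) :
    ∃ g, AnalyticAt ℂ g 0 ∧ ∀ᶠ z in 𝓝 (0 : ℂ), h z = z ^ 2 * g z := by
  have hd : deriv h 0 = 0 := by
    have h1 : deriv (fun z => h (-z)) 0 = deriv h 0 := EventuallyEq.deriv_eq heven
    rw [deriv_comp_neg] at h1
    simp only [neg_zero] at h1
    linear_combination -h1 / 2
  have h2 : ((2 : ℕ) : ℕ∞) ≤ analyticOrderAt h 0 := by
    rw [natCast_le_analyticOrderAt_iff_iteratedDeriv_eq_zero hh]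
    intro i hi
    interval_cases i <;> simp [h0, hd]
  simpa using (natCast_le_analyticOrderAt hh).mp h2

lemma analyticAt_weierstrassP (L : PeriodPair) {z : ℂ} (hz : z ∉ L.lattice) :
    AnalyticAt ℂ ℘[L] z :=
  L.analyticOnNhd_weierstrassP z hz

/-- An even elliptic function with poles at most at the lattice points is a polynomial in `℘`. -/
lemma exists_polynomial_weierstrassP (L : PeriodPair) (n : ℕ) {f : ℂ → ℂ}
    (hper : ∀ z, ∀ l ∈ L.lattice, f (z + l) = f z) (heven : ∀ z, f (-z) = f z)
    (hf : ∀ z, z ∉ L.lattice → AnalyticallyExtendsAt f z)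
    (h0 : AnalyticallyExtendsAt (fun z => z ^ (2 * n) * f z) 0) :
    ∃ P : ℂ[X], ∀ᶠ z in 𝓝[≠] (0 : ℂ), f z = P.eval (℘[L] z) := by
  induction n generalizing f with
  | zero =>
    obtain ⟨c, hc⟩ := exists_eventuallyEq_const L hper fun z => by
      by_cases hz : z ∈ L.lattice
      · have h1 : AnalyticallyExtendsAt f (z + -z) := by simpa using h0
        have h2 := h1.comp_add_const
        have h3 : (fun w => f (w + -z)) = f := funext fun w => hper w _ (neg_mem hz)
        rwa [h3] at h2
      · exact hf z hz
    exact ⟨C c, by simpa using hc⟩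
  | succ n ih =>
    obtain ⟨h, hh, hfh⟩ := h0
    set c := h 0
    have hR := L.analyticAt_weierstrassPExcept 0
    set u : ℂ → ℂ := fun z => 1 + z ^ 2 * ℘[L - (0 : ℂ)] z with hu
    have hua : AnalyticAt ℂ u 0 := by fun_prop
    have huP : ∀ z ≠ 0, z ^ (2 * (n + 1)) * ℘[L] z ^ (n + 1) = u z ^ (n + 1) := by
      intro z hz
      rw [weierstrassP_eq, pow_mul, ← mul_pow, hu]
      congr 1
      field_simp
      ring
    set h₁ : ℂ → ℂ := fun z => h z - c * u z ^ (n + 1) with hh₁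
    have hh₁a : AnalyticAt ℂ h₁ 0 := by fun_prop
    set f₁ : ℂ → ℂ := fun z => f z - c * ℘[L] z ^ (n + 1) with hf₁
    have hfh₁ : ∀ᶠ z in 𝓝[≠] (0 : ℂ), z ^ (2 * (n + 1)) * f₁ z = h₁ z := by
      filter_upwards [hfh, self_mem_nhdsWithin] with z hz hz0
      rw [hf₁, hh₁]
      simp only
      rw [← hz, ← huP z hz0]
      ring
    have hf₁even : ∀ z, f₁ (-z) = f₁ z := fun z => by simp [hf₁, heven]
    have hneg : Tendsto (fun z : ℂ => -z) (𝓝[≠] 0) (𝓝[≠] 0) := by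
      refine tendsto_nhdsWithin_of_tendsto_nhds_of_eventually_within _ ?_ ?_
      · simpa using (continuous_neg.tendsto (0 : ℂ)).mono_left nhdsWithin_le_nhds
      · filter_upwards [self_mem_nhdsWithin] with w hw
        simpa using hw
    have hh₁even : ∀ᶠ z in 𝓝 (0 : ℂ), h₁ (-z) = h₁ z := by
      have : ∀ᶠ z in 𝓝[≠] (0 : ℂ), h₁ (-z) = h₁ z := by
        filter_upwards [hfh₁, hneg.eventually hfh₁] with z hz hz'
        rw [← hz, ← hz', hf₁even, Even.neg_pow (even_two_mul _)]
      rw [eventually_nhdsWithin_iff] at this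
      filter_upwards [this] with z hz
      by_cases hz0 : z = 0
      · simp [hz0]
      · exact hz hz0
    obtain ⟨g, hg, hg'⟩ := exists_eq_sq_mul_of_even hh₁a (by simp [hh₁, hu, c]) hh₁even
    obtain ⟨P, hP⟩ := ih (f := f₁)
      (fun z l hl => by
        simp only [hf₁, hper z l hl]
        rw [L.weierstrassP_add_coe z ⟨l, hl⟩])
      hf₁even
      (fun z hz => (hf z hz).sub (AnalyticAt.analyticallyExtendsAt (by
        have := analyticAt_weierstrassP L hz
        fun_prop)))
      ⟨g, hg, by
        filter_upwards [hfh₁, nhdsWithin_le_nhds hg', self_mem_nhdsWithin] with z hz hz' hz0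
        rw [hz'] at hz
        have hz0 : z ^ 2 ≠ 0 := pow_ne_zero _ hz0
        apply mul_left_cancel₀ hz0
        rw [← hz]
        ring⟩
    refine ⟨P + C c * X ^ (n + 1), ?_⟩
    filter_upwards [hP] with z hz
    simp [← hz, hf₁]

lemma exists_finset_representatives {L L' : PeriodPair} (h : L.lattice ≤ L'.lattice) :
    ∃ S : Finset ℂ, ∀ z ∈ L'.lattice, ∃ w ∈ S, z - w ∈ L.lattice := by
  have hfr : Module.finrank ℤ (L.lattice.submoduleOf L'.lattice) =
      Module.finrank ℤ L'.lattice := by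
    rw [(Submodule.submoduleOfEquivOfLe h).finrank_eq, L.latticeEquivProd.finrank_eq,
      L'.latticeEquivProd.finrank_eq]
  have : Finite (L'.lattice ⧸ L.lattice.submoduleOf L'.lattice) :=
    Submodule.finiteQuotientOfFreeOfRankEq _ hfr
  have := Fintype.ofFinite (L'.lattice ⧸ L.lattice.submoduleOf L'.lattice)
  refine ⟨Finset.univ.image fun q : L'.lattice ⧸ L.lattice.submoduleOf L'.lattice =>
    ((q.out : L'.lattice) : ℂ), fun z hz => ?_⟩
  refine ⟨_, Finset.mem_image_of_mem _ (Finset.mem_univ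
    (Submodule.Quotient.mk (⟨z, hz⟩ : L'.lattice))), ?_⟩
  have := (Submodule.Quotient.eq (L.lattice.submoduleOf L'.lattice)).mp
    (Quotient.out_eq (Submodule.Quotient.mk
      (⟨z, hz⟩ : L'.lattice) : L'.lattice ⧸ L.lattice.submoduleOf L'.lattice)).symm
  exact this

/-- If `L ⊆ L'`, then `℘[L']` is a rational function of `℘[L]`. -/
theorem exists_rational_relation {L L' : PeriodPair} (hLL' : L.lattice ≤ L'.lattice) :
    ∃ P Q : ℂ[X], Q ≠ 0 ∧
      ∀ᶠ z in 𝓝[≠] (0 : ℂ), ℘[L'] z * Q.eval (℘[L] z) = P.eval (℘[L] z) := by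
  obtain ⟨S, hS⟩ := exists_finset_representatives hLL'
  set Q : ℂ[X] := ∏ w ∈ S, (X - C (℘[L] w)) ^ 2 with hQ
  set f : ℂ → ℂ := fun z => ℘[L'] z * Q.eval (℘[L] z) with hf
  have hmer : MeromorphicAt f 0 := by
    have h1 : MeromorphicAt ℘[L'] 0 := L'.meromorphic_weierstrassP 0
    have h2 : MeromorphicAt ℘[L] 0 := L.meromorphic_weierstrassP 0
    refine h1.fun_mul ?_
    simp only [hQ, eval_prod, eval_pow, eval_sub, eval_X, eval_C]
    refine MeromorphicAt.fun_prod fun w => ?_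
    fun_prop
  have hpole : ∃ n : ℕ, AnalyticallyExtendsAt (fun z => z ^ (2 * n) * f z) 0 := by
    obtain ⟨n, hn⟩ := hmer
    refine ⟨n, AnalyticAt.analyticallyExtendsAt ?_⟩
    have : AnalyticAt ℂ (fun z : ℂ => z ^ n * ((z - 0) ^ n • f z)) 0 := by fun_prop
    convert this using 2 with z
    simp
    ring
  obtain ⟨n, hn⟩ := hpole
  have hreg : ∀ z, z ∉ L.lattice → AnalyticallyExtendsAt f z := by
    intro z₀ hz₀
    have hPa := analyticAt_weierstrassP L hz₀
    by_cases hz₀' : z₀ ∈ L'.lattice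
    · obtain ⟨w, hw, hzw⟩ := hS z₀ hz₀'
      have hval : ℘[L] z₀ = ℘[L] w := by
        have := L.weierstrassP_add_coe w ⟨_, hzw⟩
        simpa using this
      have hPa' : AnalyticAt ℂ (fun z => ℘[L] z - ℘[L] w) z₀ := by fun_prop
      obtain ⟨g, hg, hg'⟩ := (natCast_le_analyticOrderAt hPa' (n := 1)).mp (by
        rw [natCast_le_analyticOrderAt_iff_iteratedDeriv_eq_zero hPa']
        intro i hi
        interval_cases i
        simp [hval])
      have hR : AnalyticAt ℂ (fun z => ℘[L' - (0 : ℂ)] (z - z₀)) z₀ :=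
        AnalyticAt.fun_comp (by simpa using L'.analyticAt_weierstrassPExcept 0) (by fun_prop)
      refine ⟨fun z => (1 + (z - z₀) ^ 2 * ℘[L' - (0 : ℂ)] (z - z₀)) * g z ^ 2 *
        ∏ v ∈ S.erase w, (℘[L] z - ℘[L] v) ^ 2, ?_, ?_⟩
      · refine AnalyticAt.fun_mul (by fun_prop) ?_
        refine Finset.analyticAt_fun_prod _ fun v _ => ?_
        fun_prop
      · filter_upwards [nhdsWithin_le_nhds hg', self_mem_nhdsWithin] with z hz hzz₀
        have hsub : z - z₀ ≠ 0 := sub_ne_zero.mpr hzz₀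
        simp only [pow_one, smul_eq_mul] at hz
        have h1 : ℘[L'] z = ℘[L' - (0 : ℂ)] (z - z₀) + 1 / (z - z₀) ^ 2 := by
          rw [← weierstrassP_eq]
          exact (L'.weierstrassP_sub_coe z ⟨z₀, hz₀'⟩).symm
        simp only [hf, hQ, eval_prod, eval_pow, eval_sub, eval_X, eval_C]
        rw [← Finset.mul_prod_erase S _ hw, hz, h1]
        field_simp
        ring
    · refine AnalyticAt.analyticallyExtendsAt ?_
      have := analyticAt_weierstrassP L' hz₀'
      refine AnalyticAt.fun_mul this ?_
      simp only [hQ, eval_prod, eval_pow, eval_sub, eval_X, eval_C]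
      refine Finset.analyticAt_fun_prod _ fun v _ => ?_
      fun_prop
  obtain ⟨P, hP⟩ := exists_polynomial_weierstrassP L n (f := f)
    (fun z l hl => by
      simp only [hf]
      rw [L.weierstrassP_add_coe z ⟨l, hl⟩, L'.weierstrassP_add_coe z ⟨l, hLL' hl⟩])
    (fun z => by simp [hf]) hreg hn
  exact ⟨P, Q, Finset.prod_ne_zero_iff.mpr fun w _ => pow_ne_zero _ (X_sub_C_ne_zero _), hP⟩

/-! ### Recovering an inclusion of lattices from a rational relation -/

lemma tendsto_sq_mul_weierstrassP (L : PeriodPair) :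
    Tendsto (fun z => z ^ 2 * ℘[L] z) (𝓝[≠] 0) (𝓝 1) := by
  have hc : ContinuousAt (fun z => 1 + z ^ 2 * ℘[L - (0 : ℂ)] z) 0 := by
    have := (L.analyticAt_weierstrassPExcept 0).continuousAt
    fun_prop
  have ht := hc.tendsto.mono_left (nhdsWithin_le_nhds (s := {0}ᶜ))
  simp only [ne_eq, OfNat.ofNat_ne_zero, not_false_eq_true, zero_pow, zero_mul, add_zero] at ht
  refine ht.congr' ?_
  filter_upwards [self_mem_nhdsWithin] with z hz
  have hz : z ≠ 0 := hz
  rw [weierstrassP_eq]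
  field_simp
  ring

lemma eventually_eval_weierstrassP_ne_zero (L : PeriodPair) {Q : ℂ[X]} (hQ : Q ≠ 0) :
    ∀ᶠ z in 𝓝[≠] (0 : ℂ), Q.eval (℘[L] z) ≠ 0 := by
  have hroot : ∀ r ∈ Q.roots.toFinset, ∀ᶠ z in 𝓝[≠] (0 : ℂ), ℘[L] z ≠ r := by
    intro r _
    have h1 : Tendsto (fun z : ℂ => z ^ 2 * r) (𝓝[≠] 0) (𝓝 0) := by
      have : ContinuousAt (fun z : ℂ => z ^ 2 * r) 0 := by fun_prop
      simpa using this.tendsto.mono_left (nhdsWithin_le_nhds (s := {0}ᶜ))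
    have h2 := (tendsto_sq_mul_weierstrassP L).sub h1
    filter_upwards [h2.eventually_ne (by norm_num : (1 : ℂ) - 0 ≠ 0)] with z hz hzr
    exact hz (by rw [hzr, sub_self])
  rw [← Filter.eventually_all_finset] at hroot
  filter_upwards [hroot] with z hz hz0
  exact hz _ (by simpa [hQ] using hz0) rfl

lemma eventually_notMem_lattice (L : PeriodPair) (z₀ : ℂ) :
    ∀ᶠ z in 𝓝[≠] z₀, z ∉ L.lattice := by
  filter_upwards [nhdsWithin_le_nhds (L.compl_lattice_sdiff_singleton_mem_nhds z₀),
    self_mem_nhdsWithin] with z hz hz'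
  simp_all

lemma countable_lattice (L : PeriodPair) : (L.lattice : Set ℂ).Countable := by
  have : Countable L.lattice := L.latticeEquivProd.toEquiv.countable_iff.mpr inferInstance
  exact Set.countable_coe_iff.mp this

theorem lattice_le_of_rational_relation {L L' : PeriodPair} {P Q : ℂ[X]} (hQ : Q ≠ 0)
    (h : ∀ᶠ z in 𝓝[≠] (0 : ℂ), ℘[L'] z * Q.eval (℘[L] z) = P.eval (℘[L] z)) :
    L.lattice ≤ L'.lattice := by
  set U : Set ℂ := ((L.lattice : Set ℂ) ∪ L'.lattice)ᶜ with hU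
  have hUconn : IsPreconnected U :=
    (((countable_lattice L).union (countable_lattice L')).isPathConnected_compl_of_one_lt_rank
      (by rw [Complex.rank_real_complex]; norm_num)).isConnected.isPreconnected
  have heval : ∀ (R : ℂ[X]), AnalyticOnNhd ℂ (fun z => R.eval (℘[L] z)) U := by
    intro R z hz
    have hz : z ∉ L.lattice := fun hz' => hz (Or.inl hz')
    have hP := analyticAt_weierstrassP L hz
    have hR : AnalyticAt ℂ (fun w => R.eval w) (℘[L] z) := 
      AnalyticOnNhd.eval_polynomial R _ (Set.mem_univ _)
    exact hR.fun_comp hP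
  have hP' : AnalyticOnNhd ℂ ℘[L'] U := fun z hz =>
    analyticAt_weierstrassP L' fun hz' => hz (Or.inr hz')
  obtain ⟨z₁, hz₁U, hz₁⟩ : ∃ z₁ ∈ U,
      ∀ᶠ z in 𝓝 z₁, ℘[L'] z * Q.eval (℘[L] z) = P.eval (℘[L] z) := by
    have h' := eventually_nhds_nhdsWithin.mpr h
    obtain ⟨z₁, h1, h2, h3, h4⟩ := ((h'.filter_mono nhdsWithin_le_nhds).and
      ((eventually_notMem_lattice L 0).and ((eventually_notMem_lattice L' 0).and
        self_mem_nhdsWithin))).exists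
    refine ⟨z₁, by simp [hU, h2, h3], ?_⟩
    rwa [isOpen_compl_singleton.nhdsWithin_eq h4] at h1
  have hrel : Set.EqOn (fun z => ℘[L'] z * Q.eval (℘[L] z)) (fun z => P.eval (℘[L] z)) U :=
    (hP'.mul (heval Q)).eqOn_of_preconnected_of_eventuallyEq (heval P) hUconn hz₁U hz₁
  intro l hl
  by_contra hl'
  have hshift : Tendsto (fun z : ℂ => z + l) (𝓝[≠] 0) (𝓝[≠] l) := by
    refine tendsto_nhdsWithin_of_tendsto_nhds_of_eventually_within _ ?_ ?_
    · have : ContinuousAt (fun z : ℂ => z + l) 0 := by fun_prop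
      simpa using this.tendsto.mono_left (nhdsWithin_le_nhds (s := {0}ᶜ))
    · filter_upwards [self_mem_nhdsWithin] with w hw
      simpa using hw
  have heq : ∀ᶠ z in 𝓝[≠] (0 : ℂ), ℘[L'] (z + l) = ℘[L'] z := by
    filter_upwards [h, hshift.eventually (eventually_notMem_lattice L l),
      hshift.eventually (eventually_notMem_lattice L' l),
      eventually_eval_weierstrassP_ne_zero L hQ] with z hz h1 h2 h3
    have h4 := hrel (show z + l ∈ U by simp [hU, h1, h2])
    simp only [L.weierstrassP_add_coe z ⟨l, hl⟩] at h4
    exact mul_right_cancel₀ h3 (h4.trans hz.symm)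
  have hlim : Tendsto (fun z : ℂ => z ^ 2 * ℘[L'] (z + l)) (𝓝[≠] 0) (𝓝 0) := by
    have hc : ContinuousAt (fun z : ℂ => z ^ 2 * ℘[L'] (z + l)) 0 := by
      have : ContinuousAt ℘[L'] (0 + l) := by
        simpa using (analyticAt_weierstrassP L' hl').continuousAt
      have h2 : ContinuousAt (fun z : ℂ => ℘[L'] (z + l)) 0 :=
        ContinuousAt.comp (f := fun z : ℂ => z + l) this (by fun_prop)
      fun_prop
    simpa using hc.tendsto.mono_left (nhdsWithin_le_nhds (s := {0}ᶜ))
  have := tendsto_nhds_unique hlim ((tendsto_sq_mul_weierstrassP L').congr' (by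
    filter_upwards [heq] with z hz
    rw [hz]))
  exact zero_ne_one this

/-! ### Transport of inclusions along field automorphisms -/

/-- The power series of `z ^ (2 * N) * Q (z⁻² + p z)`, for `Q` of degree at most `N`. -/
def homogenization (N : ℕ) (Q : ℂ[X]) (p : PowerSeries ℂ) : PowerSeries ℂ :=
  ∑ i ∈ Finset.range (N + 1), PowerSeries.C (Q.coeff i) *
    ((PowerSeries.C 1 + PowerSeries.X ^ 2 * p) ^ i * PowerSeries.X ^ (2 * (N - i)))

lemma homogenization_map (σ : ℂ →+* ℂ) (N : ℕ) (Q : ℂ[X]) (p : PowerSeries ℂ) :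
    (homogenization N Q p).map σ = homogenization N (Q.map σ) (p.map σ) := by
  simp [homogenization, map_sum]

lemma exists_hasTaylorSeries_homogenization (L : PeriodPair) {N : ℕ} {Q : ℂ[X]}
    (hQ : Q.natDegree ≤ N) : ∃ f : ℂ → ℂ, HasTaylorSeries f (homogenization N Q (regularPart L)) ∧
      ∀ z ≠ 0, f z = z ^ (2 * N) * Q.eval (℘[L] z) := by
  refine ⟨fun z => ∑ i ∈ Finset.range (N + 1), Q.coeff i *
    ((1 + z ^ 2 * ℘[L - (0 : ℂ)] z) ^ i * z ^ (2 * (N - i))), ?_, ?_⟩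
  · exact HasTaylorSeries.sum _ fun i _ => (HasTaylorSeries.const _).mul
      ((((HasTaylorSeries.const 1).add ((HasTaylorSeries.X_pow 2).mul
        (hasTaylorSeries_regularPart L))).pow i).mul (HasTaylorSeries.X_pow _))
  · intro z hz
    rw [eval_eq_sum_range' (Nat.lt_succ_of_le hQ), Finset.mul_sum]
    refine Finset.sum_congr rfl fun i hi => ?_
    have hi : i ≤ N := Nat.lt_succ_iff.mp (Finset.mem_range.mp hi)
    have h1 : 1 + z ^ 2 * ℘[L - (0 : ℂ)] z = z ^ 2 * ℘[L] z := by
      rw [weierstrassP_eq]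
      field_simp
      ring
    obtain ⟨k, rfl⟩ := Nat.exists_eq_add_of_le hi
    rw [h1]
    simp only [add_tsub_cancel_left]
    ring

lemma rational_relation_iff {L L' : PeriodPair} {N : ℕ} {P Q : ℂ[X]}
    (hP : P.natDegree ≤ N) (hQ : Q.natDegree ≤ N) :
    (∀ᶠ z in 𝓝[≠] (0 : ℂ), ℘[L'] z * Q.eval (℘[L] z) = P.eval (℘[L] z)) ↔
      PowerSeries.X ^ 1 * ((PowerSeries.C 1 + PowerSeries.X ^ 2 * regularPart L') *
        homogenization N Q (regularPart L)) =
      PowerSeries.X ^ 1 * (PowerSeries.X ^ 2 * homogenization N P (regularPart L)) := by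
  obtain ⟨f, hf, hf'⟩ := exists_hasTaylorSeries_homogenization L hP
  obtain ⟨g, hg, hg'⟩ := exists_hasTaylorSeries_homogenization L hQ
  have h1 := (HasTaylorSeries.X_pow 1).mul (((HasTaylorSeries.const 1).add
    ((HasTaylorSeries.X_pow 2).mul (hasTaylorSeries_regularPart L'))).mul hg)
  have h2 := (HasTaylorSeries.X_pow 1).mul ((HasTaylorSeries.X_pow 2).mul hf)
  have key : ∀ z ≠ 0, (z ^ 1 * ((1 + z ^ 2 * ℘[L' - (0 : ℂ)] z) * g z) = z ^ 1 * (z ^ 2 * f z) ↔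
      ℘[L'] z * Q.eval (℘[L] z) = P.eval (℘[L] z)) := by
    intro z hz
    have h3 : 1 + z ^ 2 * ℘[L' - (0 : ℂ)] z = z ^ 2 * ℘[L'] z := by
      rw [weierstrassP_eq]
      field_simp
      ring
    rw [h3, hf' z hz, hg' z hz]
    have h4 : z ^ (2 * N + 3) ≠ 0 := pow_ne_zero _ hz
    constructor
    · intro h
      apply mul_left_cancel₀ h4
      linear_combination h
    · intro h
      linear_combination z ^ (2 * N + 3) * h
  constructor
  · intro h
    refine h1.unique (h2.congr ?_)
    rw [eventually_nhdsWithin_iff] at h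
    filter_upwards [h] with z hz
    by_cases hz0 : z = 0
    · simp [hz0]
    · exact ((key z hz0).mpr (hz hz0)).symm
  · intro h
    rw [← h] at h2
    filter_upwards [nhdsWithin_le_nhds (h1.eventuallyEq h2), self_mem_nhdsWithin] with z hz hz0
    exact (key z hz0).mp hz

/-- Inclusions between lattices are preserved when a field endomorphism is applied to the
Weierstrass invariants. -/
theorem lattice_le_of_ringHom (σ : ℂ →+* ℂ) {L L' M M' : PeriodPair}
    (h₂ : M.g₂ = σ L.g₂) (h₃ : M.g₃ = σ L.g₃) (h₂' : M'.g₂ = σ L'.g₂) (h₃' : M'.g₃ = σ L'.g₃)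
    (hL : L.lattice ≤ L'.lattice) : M.lattice ≤ M'.lattice := by
  obtain ⟨P, Q, hQ, hPQ⟩ := exists_rational_relation hL
  have hrel := (rational_relation_iff (le_max_left P.natDegree Q.natDegree)
    (le_max_right P.natDegree Q.natDegree)).mp hPQ
  have hmap := congrArg (PowerSeries.map σ) hrel
  simp only [map_mul, map_pow, map_add, PowerSeries.map_X, PowerSeries.map_C, map_one σ,
    homogenization_map, map_regularPart σ h₂ h₃, map_regularPart σ h₂' h₃'] at hmap
  exact lattice_le_of_rational_relation ((Polynomial.map_ne_zero_iff σ.injective).mpr hQ)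
    ((rational_relation_iff (natDegree_map_le.trans (le_max_left _ _))
      (natDegree_map_le.trans (le_max_right _ _))).mpr hmap)

/-- The Weierstrass invariants determine the lattice. -/
theorem lattice_eq_of_invariants_eq {L M : PeriodPair} (h₂ : L.g₂ = M.g₂) (h₃ : L.g₃ = M.g₃) :
    L.lattice = M.lattice :=
  le_antisymm
    (lattice_le_of_ringHom (RingHom.id ℂ) (L := M) (L' := M) h₂ h₃ rfl rfl le_rfl)
    (lattice_le_of_ringHom (RingHom.id ℂ) (L := M) (L' := M) rfl rfl h₂ h₃ le_rfl)

/-! ### Homothety and the modular invariant of a lattice -/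

lemma G_eq_tsum_prod (L : PeriodPair) (n : ℕ) :
    L.G n = ∑' p : ℤ × ℤ, (((p.1 : ℂ) * L.ω₁ + (p.2 : ℂ) * L.ω₂) ^ n)⁻¹ := by
  rw [PeriodPair.G, ← L.latticeEquivProd.symm.toEquiv.tsum_eq]
  refine tsum_congr fun p => ?_
  rw [← L.latticeEquiv_symm_apply]
  rfl

lemma G_congr {L M : PeriodPair} (h : L.lattice = M.lattice) (n : ℕ) : L.G n = M.G n := by
  unfold PeriodPair.G
  rw [h]

lemma g₂_congr {L M : PeriodPair} (h : L.lattice = M.lattice) : L.g₂ = M.g₂ := by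
  rw [PeriodPair.g₂, PeriodPair.g₂, G_congr h]

lemma g₃_congr {L M : PeriodPair} (h : L.lattice = M.lattice) : L.g₃ = M.g₃ := by
  rw [PeriodPair.g₃, PeriodPair.g₃, G_congr h]

/-- The homothetic image of a pair of periods. -/
def scale (α : ℂ) (hα : α ≠ 0) (L : PeriodPair) : PeriodPair where
  ω₁ := α * L.ω₁
  ω₂ := α * L.ω₂
  indep := by
    have h := L.indep
    rw [LinearIndependent.pair_iff] at h ⊢
    intro s t hst
    refine h s t (mul_left_cancel₀ hα ?_)
    simp only [Complex.real_smul] at hst ⊢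
    linear_combination hst

lemma lattice_scale (α : ℂ) (hα : α ≠ 0) (L : PeriodPair) :
    (scale α hα L).lattice = Submodule.span ℤ {α} * L.lattice := by
  simp [PeriodPair.lattice, scale, Submodule.span_mul_span, Set.image_pair]

lemma G_scale (α : ℂ) (hα : α ≠ 0) (L : PeriodPair) (n : ℕ) :
    (scale α hα L).G n = (α⁻¹) ^ n * L.G n := by
  rw [G_eq_tsum_prod, G_eq_tsum_prod, ← tsum_mul_left]
  refine tsum_congr fun p => ?_
  rw [scale, inv_pow, ← mul_inv, ← mul_pow]
  ring_nf

lemma g₂_scale (α : ℂ) (hα : α ≠ 0) (L : PeriodPair) :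
    (scale α hα L).g₂ = (α⁻¹) ^ 4 * L.g₂ := by
  rw [PeriodPair.g₂, PeriodPair.g₂, G_scale]
  ring

lemma g₃_scale (α : ℂ) (hα : α ≠ 0) (L : PeriodPair) :
    (scale α hα L).g₃ = (α⁻¹) ^ 6 * L.g₃ := by
  rw [PeriodPair.g₃, PeriodPair.g₃, G_scale]
  ring

/-- The modular invariant of a lattice. -/
def jInvariant (L : PeriodPair) : ℂ := 1728 * L.g₂ ^ 3 / (L.g₂ ^ 3 - 27 * L.g₃ ^ 2)

lemma jInvariant_congr {L M : PeriodPair} (h : L.lattice = M.lattice) :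
    jInvariant L = jInvariant M := by
  rw [jInvariant, jInvariant, g₂_congr h, g₃_congr h]

lemma jInvariant_scale (α : ℂ) (hα : α ≠ 0) (L : PeriodPair) :
    jInvariant (scale α hα L) = jInvariant L := by
  rw [jInvariant, jInvariant, g₂_scale, g₃_scale]
  have h : (α⁻¹) ^ 12 ≠ 0 := pow_ne_zero _ (inv_ne_zero hα)
  rw [← mul_div_mul_left (1728 * L.g₂ ^ 3) _ h]
  ring_nf

/-- The pair of periods `(τ, 1)`. -/
def ofUpperHalfPlane (τ : ℍ) : PeriodPair where
  ω₁ := τ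
  ω₂ := 1
  indep := by
    rw [LinearIndependent.pair_iff]
    intro s t hst
    have him := congrArg Complex.im hst
    have hs : s = 0 := by simpa [τ.im_pos.ne', UpperHalfPlane.im_ne_zero] using him
    subst hs
    simpa using hst

lemma jFunction_eq (τ : ℍ) : JPaper.jFunction τ = jInvariant (ofUpperHalfPlane τ) := by
  have h : ∀ n : ℕ, n ≠ 0 → (∑' p : ℤ × ℤ, if p = 0 then 0 else
      (((p.1 : ℂ) * (τ : ℂ) + (p.2 : ℂ)) ^ n)⁻¹) = (ofUpperHalfPlane τ).G n := by
    intro n hn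
    rw [G_eq_tsum_prod]
    refine tsum_congr fun p => ?_
    split_ifs with hp
    · simp [hp, hn]
    · simp [ofUpperHalfPlane]
  simp only [JPaper.jFunction, h 4 (by norm_num), h 6 (by norm_num)]
  rfl

/-! ### Existence of lattices with given invariants -/

section EisensteinSeriesFacts

open ModularForm EisensteinSeries

lemma G_ofUpperHalfPlane (τ : ℍ) {k : ℕ} (hk : 3 ≤ k) :
    (ofUpperHalfPlane τ).G k = 2 * riemannZeta k * E hk τ := by
  have h := tsum_eisSummand_eq_riemannZeta_mul_eisensteinSeries hk τ
  have hE : E hk τ = (1 / 2 : ℂ) • eisensteinSeriesSIF (N := 1) 0 k τ := rfl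
  rw [hE, eisensteinSeriesSIF_apply, G_eq_tsum_prod, ← (finTwoArrowEquiv ℤ).tsum_eq]
  have h' : ∑' v : Fin 2 → ℤ, eisSummand k v τ = ∑' c : Fin 2 → ℤ,
      ((((finTwoArrowEquiv ℤ c).1 : ℂ) * (ofUpperHalfPlane τ).ω₁ +
        ((finTwoArrowEquiv ℤ c).2 : ℂ) * (ofUpperHalfPlane τ).ω₂) ^ k)⁻¹ := by
    refine tsum_congr fun v => ?_
    simp [eisSummand, ofUpperHalfPlane]
  rw [← h', h, smul_eq_mul]
  ring

lemma riemannZeta_six : riemannZeta 6 = Real.pi ^ 6 / 945 := by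
  have h := riemannZeta_two_mul_nat (k := 3) (by norm_num)
  have hB : _root_.bernoulli 6 = 1 / 42 := by
    rw [bernoulli_eq_bernoulli'_of_ne_one (by norm_num)]
    have h5 : bernoulli' 5 = 0 := bernoulli'_eq_zero_of_odd ⟨2, rfl⟩ (by norm_num)
    have hc : Nat.choose 6 2 = 15 ∧ Nat.choose 6 4 = 15 := by decide
    rw [bernoulli'_def]
    norm_num [Finset.sum_range_succ, h5, hc]
  norm_num [hB, Nat.factorial] at h
  rw [h]
  ring

lemma g₂_ofUpperHalfPlane (τ : ℍ) :
    (ofUpperHalfPlane τ).g₂ = 4 * Real.pi ^ 4 / 3 * E₄ τ := by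
  have := riemannZeta_four
  rw [PeriodPair.g₂, G_ofUpperHalfPlane τ (by norm_num : 3 ≤ 4)]
  push_cast
  rw [this]
  ring

lemma g₃_ofUpperHalfPlane (τ : ℍ) :
    (ofUpperHalfPlane τ).g₃ = 8 * Real.pi ^ 6 / 27 * E₆ τ := by
  have := riemannZeta_six
  rw [PeriodPair.g₃, G_ofUpperHalfPlane τ (by norm_num : 3 ≤ 6)]
  push_cast
  rw [this]
  ring

lemma exists_eq_scale_ofUpperHalfPlane (L : PeriodPair) :
    ∃ (α : ℂ) (hα : α ≠ 0) (τ : ℍ), L.lattice = (scale α hα (ofUpperHalfPlane τ)).lattice := by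
  have hind := LinearIndependent.pair_iff.mp L.indep
  have h₁ : L.ω₁ ≠ 0 := fun h => by simpa using hind 1 0 (by simp [h])
  have h₂ : L.ω₂ ≠ 0 := fun h => by simpa using hind 0 1 (by simp [h])
  have him : (L.ω₁ / L.ω₂).im ≠ 0 := by
    intro him
    have hre : L.ω₁ / L.ω₂ = ((L.ω₁ / L.ω₂).re : ℂ) := Complex.ext rfl (by simpa using him)
    have := (hind 1 (-(L.ω₁ / L.ω₂).re) (by
      simp only [Complex.real_smul, Complex.ofReal_neg, ← hre]
      field_simp
      simp)).1
    exact one_ne_zero this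
  rcases him.lt_or_gt with him | him
  · refine ⟨L.ω₂, h₂, ⟨-(L.ω₁ / L.ω₂), by simpa using him⟩, ?_⟩
    have h : L.ω₂ * -(L.ω₁ / L.ω₂) = -L.ω₁ := by field_simp
    simp only [PeriodPair.lattice, scale, ofUpperHalfPlane, h, mul_one]
    rw [Submodule.span_insert, Submodule.span_insert, ← Set.neg_singleton, Submodule.span_neg]
  · refine ⟨L.ω₂, h₂, ⟨L.ω₁ / L.ω₂, him⟩, ?_⟩
    have h : L.ω₂ * (L.ω₁ / L.ω₂) = L.ω₁ := by field_simp
    simp only [PeriodPair.lattice, scale, ofUpperHalfPlane, h, mul_one]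

lemma discriminant_ofUpperHalfPlane_ne_zero (τ : ℍ) :
    (ofUpperHalfPlane τ).g₂ ^ 3 - 27 * (ofUpperHalfPlane τ).g₃ ^ 2 ≠ 0 := by
  have h := discriminant_eq_E₄_cube_sub_E₆_sq τ
  have hΔ := discriminant_ne_zero τ
  have hpi : (Real.pi : ℂ) ≠ 0 := by exact_mod_cast Real.pi_ne_zero
  have : (ofUpperHalfPlane τ).g₂ ^ 3 - 27 * (ofUpperHalfPlane τ).g₃ ^ 2 =
      64 * Real.pi ^ 12 / 27 * 1728 * ModularForm.discriminant τ := by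
    rw [g₂_ofUpperHalfPlane, g₃_ofUpperHalfPlane, h]
    ring
  rw [this]
  exact mul_ne_zero (by simp [hpi]) hΔ

lemma discriminant_lattice_ne_zero (L : PeriodPair) : L.g₂ ^ 3 - 27 * L.g₃ ^ 2 ≠ 0 := by
  obtain ⟨α, hα, τ, h⟩ := exists_eq_scale_ofUpperHalfPlane L
  rw [g₂_congr h, g₃_congr h, g₂_scale, g₃_scale]
  have := mul_ne_zero (pow_ne_zero 12 (inv_ne_zero hα)) (discriminant_ofUpperHalfPlane_ne_zero τ)
  convert this using 1
  ring

lemma tendsto_atImInfty {k : ℤ} (f : ModularForm 𝒮ℒ k) :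
    Tendsto f atImInfty (𝓝 ((qExpansion 1 f).coeff 0)) := by
  have hanal := ModularFormClass.analyticAt_cuspFunction_zero f one_pos one_mem_strictPeriods_SL
  have hper := SlashInvariantFormClass.periodic_comp_ofComplex f one_mem_strictPeriods_SL
  rw [qExpansion_coeff_zero one_pos hanal hper, ← cuspFunction_apply_zero one_pos hanal hper]
  exact (hanal.continuousAt.tendsto.comp (qParam_tendsto_atImInfty one_pos)).congr
    (fun τ => SlashInvariantFormClass.eq_cuspFunction f τ one_mem_strictPeriods_SL one_ne_zero)

/-- A modular form of level one and positive weight that does not vanish at infinity has a zero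
in the upper half plane. -/
lemma exists_zero_of_tendsto {k : ℤ} (hk : 0 < k) (f : ModularForm 𝒮ℒ k) {c : ℂ} (hc : c ≠ 0)
    (hf : Tendsto f atImInfty (𝓝 c)) : ∃ z, f z = 0 := by
  by_contra! hz
  have hslash : ∀ γ : SL(2, ℤ), (fun z => 1 / f z) ∣[-k] γ = fun z => 1 / f z := by
    intro γ
    have hγ : (γ : GL (Fin 2) ℝ) ∈ 𝒮ℒ := ⟨γ, rfl⟩
    change ((1 : ModularForm 𝒮ℒ 0) / ⇑f : ℍ → ℂ) ∣[-k] γ = (1 : ModularForm 𝒮ℒ 0) / ⇑f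
    rw [show (-k : ℤ) = 0 - k by ring]
    simp_rw [div_slash_SL2, SL_slash, SlashInvariantForm.slash_action_eqn _ _ hγ]
  let g : ModularForm 𝒮ℒ (-k) :=
    { toFun z := 1 / f z
      slash_action_eq' := fun _ ⟨γ, hγ⟩ => hγ ▸ hslash γ
      holo' := (1 : ModularForm 𝒮ℒ 0).holo'.div f.holo' hz
      bdd_at_cusps' {c} hc := by
        rw [Subgroup.IsArithmetic.isCusp_iff_isCusp_SL2Z] at hc
        rw [OnePoint.isBoundedAt_iff_forall_SL2Z hc]
        intro γ _
        rw [hslash γ, IsBoundedAtImInfty, BoundedAtFilter]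
        simp only [one_div]
        exact (hf.inv₀ (by assumption)).isBigO_one ℝ }
  have hg := ModularFormClass.levelOne_neg_weight_eq_zero (neg_lt_zero.mpr hk) g
  have := congrFun hg I
  have h1 : 1 / f I = 0 := this
  simp [hz] at h1

/-- Every pair `(a, b)` with `a ^ 3 ≠ 27 * b ^ 2` is the pair of invariants of a lattice. -/
theorem exists_lattice_of_invariants {a b : ℂ} (hab : a ^ 3 - 27 * b ^ 2 ≠ 0) :
    ∃ L : PeriodPair, L.g₂ = a ∧ L.g₃ = b := by
  have hpi : (Real.pi : ℂ) ≠ 0 := by exact_mod_cast Real.pi_ne_zero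
  obtain ⟨τ, hτ⟩ : ∃ τ : ℍ, b ^ 2 * (ofUpperHalfPlane τ).g₂ ^ 3 =
      a ^ 3 * (ofUpperHalfPlane τ).g₃ ^ 2 := by
    set c₄ : ℂ := 4 * Real.pi ^ 4 / 3
    set c₆ : ℂ := 8 * Real.pi ^ 6 / 27
    let f : ModularForm 𝒮ℒ 12 := (b ^ 2 * c₄ ^ 3) • ModularForm.mcast (by decide) (E₄.pow 3) -
      (a ^ 3 * c₆ ^ 2) • ModularForm.mcast (by decide) (E₆.pow 2)
    have hfapp : ∀ z, f z = b ^ 2 * c₄ ^ 3 * E₄ z ^ 3 - a ^ 3 * c₆ ^ 2 * E₆ z ^ 2 := by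
      intro z
      have h₄ : (E₄.pow 3) z = E₄ z ^ 3 := congrFun (ModularForm.coe_pow E₄ 3) z
      have h₆ : (E₆.pow 2) z = E₆ z ^ 2 := congrFun (ModularForm.coe_pow E₆ 2) z
      rw [← h₄, ← h₆]
      simp [f, ModularForm.coe_mcast]
    have h4 := tendsto_atImInfty E₄
    have h6 := tendsto_atImInfty E₆
    rw [E_qExpansion_coeff_zero _ ⟨2, rfl⟩] at h4
    rw [E_qExpansion_coeff_zero _ ⟨3, rfl⟩] at h6
    have hf := ((h4.pow 3).const_mul (b ^ 2 * c₄ ^ 3)).sub ((h6.pow 2).const_mul (a ^ 3 * c₆ ^ 2))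
    obtain ⟨τ, hτ⟩ := exists_zero_of_tendsto (by norm_num) f
      (c := b ^ 2 * c₄ ^ 3 * 1 ^ 3 - a ^ 3 * c₆ ^ 2 * 1 ^ 2) (by
        have : b ^ 2 * c₄ ^ 3 * 1 ^ 3 - a ^ 3 * c₆ ^ 2 * 1 ^ 2 =
            -(64 * Real.pi ^ 12 / 729) * (a ^ 3 - 27 * b ^ 2) := by
          simp only [c₄, c₆]
          ring
        rw [this]
        exact mul_ne_zero (by simp [hpi]) hab) (hf.congr fun z => (hfapp z).symm)
    refine ⟨τ, ?_⟩
    rw [g₂_ofUpperHalfPlane, g₃_ofUpperHalfPlane]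
    rw [hfapp] at hτ
    linear_combination hτ
  have hdisc := discriminant_ofUpperHalfPlane_ne_zero τ
  suffices h : ∃ μ : ℂ, μ ≠ 0 ∧ μ ^ 4 * (ofUpperHalfPlane τ).g₂ = a ∧
      μ ^ 6 * (ofUpperHalfPlane τ).g₃ = b by
    obtain ⟨μ, hμ, h₂, h₃⟩ := h
    refine ⟨scale μ⁻¹ (inv_ne_zero hμ) (ofUpperHalfPlane τ), ?_, ?_⟩
    · rw [g₂_scale, inv_inv, h₂]
    · rw [g₃_scale, inv_inv, h₃]
  generalize (ofUpperHalfPlane τ).g₂ = g₂ at hτ hdisc ⊢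
  generalize (ofUpperHalfPlane τ).g₃ = g₃ at hτ hdisc ⊢
  have hroot : ∀ (x : ℂ) {n : ℕ}, 0 < n → x ≠ 0 → ∃ μ : ℂ, μ ≠ 0 ∧ μ ^ n = x := by
    intro x n hn hx
    obtain ⟨μ, hμ⟩ := IsAlgClosed.exists_pow_nat_eq x hn
    exact ⟨μ, fun h => hx (by rw [← hμ, h, zero_pow hn.ne']), hμ⟩
  rcases eq_or_ne a 0 with rfl | ha
  · have hb : b ≠ 0 := fun hb => hab (by simp [hb])
    have hg₂ : g₂ = 0 := by simpa [hb] using hτ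
    have hg₃ : g₃ ≠ 0 := fun h => hdisc (by simp [h, hg₂])
    obtain ⟨μ, hμ0, hμ⟩ := hroot (b / g₃) (n := 6) (by norm_num) (div_ne_zero hb hg₃)
    exact ⟨μ, hμ0, by simp [hg₂], by rw [hμ, div_mul_cancel₀ _ hg₃]⟩
  rcases eq_or_ne b 0 with rfl | hb
  · have hg₃ : g₃ = 0 := by simpa [ha] using hτ.symm
    have hg₂ : g₂ ≠ 0 := fun h => hdisc (by simp [h, hg₃])
    obtain ⟨μ, hμ0, hμ⟩ := hroot (a / g₂) (n := 4) (by norm_num) (div_ne_zero ha hg₂)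
    exact ⟨μ, hμ0, by rw [hμ, div_mul_cancel₀ _ hg₂], by simp [hg₃]⟩
  have hg₂ : g₂ ≠ 0 := by
    rintro rfl
    have : g₃ = 0 := by simpa [ha] using hτ.symm
    exact hdisc (by simp [this])
  have hg₃ : g₃ ≠ 0 := by
    rintro rfl
    exact hg₂ (by simpa [hb] using hτ)
  obtain ⟨μ, hμ0, hμ⟩ := hroot (b * g₂ / (a * g₃)) (n := 2) (by norm_num)
    (div_ne_zero (mul_ne_zero hb hg₂) (mul_ne_zero ha hg₃))
  refine ⟨μ, hμ0, ?_, ?_⟩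
  · rw [show μ ^ 4 = (μ ^ 2) ^ 2 by ring, hμ]
    field_simp
    linear_combination hτ
  · rw [show μ ^ 6 = (μ ^ 2) ^ 3 by ring, hμ]
    field_simp
    linear_combination hτ

end EisensteinSeriesFacts

/-! ### Quadratic modules and their inverses -/

section QuadraticModules

variable {A : Type*} [CommRing A]

/-- The additive subgroup generated by `s` and `1`. -/
def pairModule (s : A) : Submodule ℤ A := Submodule.span ℤ {s, 1}

lemma mem_pairModule {s x : A} : x ∈ pairModule s ↔ ∃ m n : ℤ, m * s + n = x := by
  simp [pairModule, Submodule.mem_span_pair]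

lemma one_le_pairModule (s : A) : 1 ≤ pairModule s := by
  rw [Submodule.one_le]
  exact Submodule.subset_span (by simp)

/-- An element satisfying a primitive integral quadratic equation generates an invertible
module over the order `ℤ + ℤ a s`. -/
lemma pairModule_mul_eq {s : A} {a b c : ℤ} (h : a * s ^ 2 + b * s + c = 0)
    (hu : ∃ u v w : ℤ, u * a + v * b + w * c = 1) :
    pairModule s * Submodule.span ℤ {(a : A), b + a * s} = pairModule (a * s) := by
  obtain ⟨u, v, w, hu⟩ := hu
  have hu' : (u : A) * a + v * b + w * c = 1 := by simpa using congrArg (Int.cast : ℤ → A) hu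
  refine le_antisymm ?_ ?_
  · rw [pairModule, Submodule.span_mul_span, Submodule.span_le]
    rintro _ ⟨x, hx, y, hy, rfl⟩
    simp only [Set.mem_insert_iff, Set.mem_singleton_iff] at hx hy
    simp only [SetLike.mem_coe, mem_pairModule]
    rcases hx with rfl | rfl <;> rcases hy with rfl | rfl
    · exact ⟨1, 0, by push_cast; ring⟩
    · exact ⟨0, -c, by push_cast; linear_combination -h⟩
    · exact ⟨0, a, by push_cast; ring⟩
    · exact ⟨1, b, by push_cast; ring⟩
  · have hs : s ∈ pairModule s := Submodule.subset_span (by simp)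
    have h1 : (1 : A) ∈ pairModule s := Submodule.subset_span (by simp)
    have ha : (a : A) ∈ Submodule.span ℤ {(a : A), b + a * s} := Submodule.subset_span (by simp)
    have hb : (b + a * s : A) ∈ Submodule.span ℤ {(a : A), b + a * s} :=
      Submodule.subset_span (by simp)
    have has := Submodule.mul_mem_mul hs ha
    have hsb := Submodule.mul_mem_mul hs hb
    have h1a := Submodule.mul_mem_mul h1 ha
    have h1b := Submodule.mul_mem_mul h1 hb
    rw [pairModule, Submodule.span_le]
    rintro x (rfl | rfl)
    · rwa [mul_comm s] at has
    · have := add_mem (add_mem (add_mem (Submodule.smul_mem _ u h1a) (Submodule.smul_mem _ v h1b))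
        (Submodule.smul_mem _ (-v) has)) (Submodule.smul_mem _ (-w) hsb)
      rw [SetLike.mem_coe]
      convert this using 1
      simp only [zsmul_eq_mul, Int.cast_neg]
      linear_combination -hu' + w * h

lemma pairModule_mul_pairModule {s : A} {a b c : ℤ} (h : a * s ^ 2 + b * s + c = 0) :
    pairModule (a * s) * pairModule s = pairModule s := by
  refine le_antisymm ?_ ?_
  · conv_lhs => rw [pairModule, pairModule, Submodule.span_mul_span]
    rw [Submodule.span_le]
    rintro _ ⟨x, hx, y, hy, rfl⟩
    simp only [Set.mem_insert_iff, Set.mem_singleton_iff] at hx hy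
    simp only [SetLike.mem_coe, mem_pairModule]
    rcases hx with rfl | rfl <;> rcases hy with rfl | rfl
    · exact ⟨-b, -c, by push_cast; linear_combination -h⟩
    · exact ⟨a, 0, by push_cast; ring⟩
    · exact ⟨1, 0, by push_cast; ring⟩
    · exact ⟨0, 1, by push_cast; ring⟩
  · exact le_mul_of_one_le_left' (one_le_pairModule _)

lemma div_eq_mul_of_mul_eq {O L M N : Submodule ℤ A} (hO : 1 ≤ O) (hMN : M * N = O)
    (hL : O * L = L) : L / M = L * N := by
  refine le_antisymm ?_ ?_
  · intro x hx
    rw [Submodule.mem_div_iff_forall_mul_mem] at hx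
    have h1 : x ∈ Submodule.span ℤ {x} * (M * N) := by
      rw [hMN]
      simpa using Submodule.mul_mem_mul (Submodule.mem_span_singleton_self x)
        (Submodule.one_le.mp hO)
    rw [← mul_assoc] at h1
    refine (mul_le_mul_left ?_ N : _ ≤ L * N) h1
    rw [Submodule.mul_le]
    intro y hy z hz
    obtain ⟨n, rfl⟩ := Submodule.mem_span_singleton.mp hy
    rw [smul_mul_assoc]
    exact Submodule.smul_mem _ _ (hx z hz)
  · rw [Submodule.le_div_iff_mul_le, mul_assoc, mul_comm N, hMN, mul_comm, hL]

end QuadraticModules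

/-! ### Conjugate lattices -/

lemma exists_conjLattice (σ : ℂ ≃+* ℂ) (L : PeriodPair) :
    ∃ M : PeriodPair, M.g₂ = σ L.g₂ ∧ M.g₃ = σ L.g₃ := by
  apply exists_lattice_of_invariants
  have := (map_ne_zero σ).mpr (discriminant_lattice_ne_zero L)
  rwa [map_sub, map_mul, map_pow, map_pow, map_ofNat] at this

/-- The lattice whose invariants are the images of the invariants of `L` under `σ`. -/
def conjLattice (σ : ℂ ≃+* ℂ) (L : PeriodPair) : PeriodPair := (exists_conjLattice σ L).choose

lemma g₂_conjLattice (σ : ℂ ≃+* ℂ) (L : PeriodPair) : (conjLattice σ L).g₂ = σ L.g₂ :=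
  (exists_conjLattice σ L).choose_spec.1

lemma g₃_conjLattice (σ : ℂ ≃+* ℂ) (L : PeriodPair) : (conjLattice σ L).g₃ = σ L.g₃ :=
  (exists_conjLattice σ L).choose_spec.2

lemma jInvariant_conjLattice (σ : ℂ ≃+* ℂ) (L : PeriodPair) :
    jInvariant (conjLattice σ L) = σ (jInvariant L) := by
  simp only [jInvariant, g₂_conjLattice, g₃_conjLattice, map_div₀, map_sub, map_mul, map_pow,
    map_ofNat]

lemma lattice_conjLattice_scale (σ : ℂ ≃+* ℂ) (α : ℂ) (hα : α ≠ 0) (L : PeriodPair) :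
    (conjLattice σ (scale α hα L)).lattice = Submodule.span ℤ {σ α} * (conjLattice σ L).lattice := by
  rw [← lattice_scale (σ α) ((map_ne_zero σ).mpr hα)]
  apply lattice_eq_of_invariants_eq
  · simp [g₂_conjLattice, g₂_scale]
  · simp [g₃_conjLattice, g₃_scale]

lemma lattice_conjLattice_le_iff (σ : ℂ ≃+* ℂ) {L M : PeriodPair} :
    (conjLattice σ L).lattice ≤ (conjLattice σ M).lattice ↔ L.lattice ≤ M.lattice :=
  ⟨lattice_le_of_ringHom σ.symm.toRingHom (by simp [g₂_conjLattice]) (by simp [g₃_conjLattice])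
    (by simp [g₂_conjLattice]) (by simp [g₃_conjLattice]),
  lattice_le_of_ringHom σ.toRingHom (g₂_conjLattice σ L) (g₃_conjLattice σ L)
    (g₂_conjLattice σ M) (g₃_conjLattice σ M)⟩

lemma mem_div_iff_span_mul_le {I J : Submodule ℤ ℂ} {x : ℂ} :
    x ∈ I / J ↔ Submodule.span ℤ {x} * J ≤ I := by
  rw [← Submodule.le_div_iff_mul_le, Submodule.span_singleton_le_iff_mem]

lemma map_mem_div_conjLattice (σ : ℂ ≃+* ℂ) {L M : PeriodPair} {x : ℂ} :
    σ x ∈ (conjLattice σ L).lattice / (conjLattice σ M).lattice ↔ x ∈ L.lattice / M.lattice := by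
  rcases eq_or_ne x 0 with rfl | hx
  · simp
  rw [mem_div_iff_span_mul_le, mem_div_iff_span_mul_le, ← lattice_conjLattice_scale σ x hx,
    lattice_conjLattice_le_iff, lattice_scale]

/-! ### Galois action on lattices with complex multiplication -/

/-- A complex number satisfying an integral quadratic equation. -/
def IsQuadratic (z : ℂ) : Prop := ∃ a b c : ℤ, a ≠ 0 ∧ a * z ^ 2 + b * z + c = 0

lemma IsQuadratic.exists_primitive {z : ℂ} (hz : IsQuadratic z) :
    ∃ a b c : ℤ, 0 < a ∧ a * z ^ 2 + b * z + c = 0 ∧ ∃ u v w : ℤ, u * a + v * b + w * c = 1 := by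
  obtain ⟨a, b, c, ha, h⟩ := hz
  wlog hpos : 0 < a generalizing a b c
  · refine this (-a) (-b) (-c) (neg_ne_zero.mpr ha) ?_ (by omega)
    push_cast
    linear_combination -h
  obtain ⟨d, hda, hdb, hdc, u, v, w, hbez⟩ : ∃ d : ℤ, d ∣ a ∧ d ∣ b ∧ d ∣ c ∧
      ∃ u v w : ℤ, u * a + v * b + w * c = d := by
    have h₁ := Int.gcd_eq_gcd_ab a b
    have h₂ := Int.gcd_eq_gcd_ab (Int.gcd a b) c
    generalize Int.gcdA (Int.gcd a b) c = x at h₂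
    generalize Int.gcdB (Int.gcd a b) c = y at h₂
    refine ⟨Int.gcd (Int.gcd a b) c, (Int.gcd_dvd_left ..).trans (Int.gcd_dvd_left ..),
      (Int.gcd_dvd_left ..).trans (Int.gcd_dvd_right ..), Int.gcd_dvd_right ..,
      Int.gcdA a b * x, Int.gcdB a b * x, y, ?_⟩
    linear_combination -h₂ - x * h₁
  wlog hdpos : 0 < d generalizing d u v w
  · have hd0 : d ≠ 0 := fun h0 => ha (by rw [h0] at hda; exact zero_dvd_iff.mp hda)
    exact this (-d) (neg_dvd.mpr hda) (neg_dvd.mpr hdb) (neg_dvd.mpr hdc) (-u) (-v) (-w)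
      (by linear_combination -hbez) (by omega)
  have hd0 := hdpos.ne'
  obtain ⟨a', rfl⟩ := hda
  obtain ⟨b', rfl⟩ := hdb
  obtain ⟨c', rfl⟩ := hdc
  refine ⟨a', b', c', pos_of_mul_pos_right hpos hdpos.le, ?_, u, v, w, ?_⟩
  · have : (d : ℂ) ≠ 0 := by exact_mod_cast hd0
    refine mul_left_cancel₀ this ?_
    push_cast at h
    linear_combination h
  · refine mul_left_cancel₀ hd0 ?_
    linear_combination hbez

lemma lattice_ofUpperHalfPlane (τ : ℍ) : (ofUpperHalfPlane τ).lattice = pairModule (τ : ℂ) := rfl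

lemma span_singleton_inv_mul {α : ℂ} (hα : α ≠ 0) :
    Submodule.span ℤ {α⁻¹} * Submodule.span ℤ {α} = 1 := by
  rw [Submodule.span_mul_span, Set.singleton_mul_singleton, inv_mul_cancel₀ hα,
    Submodule.one_eq_span]

lemma le_of_span_singleton_mul_le {α : ℂ} (hα : α ≠ 0) {I J : Submodule ℤ ℂ}
    (h : Submodule.span ℤ {α} * I ≤ Submodule.span ℤ {α} * J) : I ≤ J := by
  have := mul_le_mul_right h (Submodule.span ℤ {α⁻¹})
  rwa [← mul_assoc, ← mul_assoc, span_singleton_inv_mul hα, one_mul, one_mul] at this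

lemma mem_div_self_of_scale {α : ℂ} (hα : α ≠ 0) {I : Submodule ℤ ℂ} {t : ℂ}
    (h : t ∈ (Submodule.span ℤ {α} * I) / (Submodule.span ℤ {α} * I)) : t ∈ I / I := by
  rw [mem_div_iff_span_mul_le] at h ⊢
  refine le_of_span_singleton_mul_le hα ?_
  rwa [mul_left_comm]

/-- A lattice `ℤ + ℤ τ` with a nonreal multiplier `t` comes from a quadratic `τ`. -/
lemma isQuadratic_of_mem_div {τ : ℍ} {t : ℂ} (ht : t.im ≠ 0)
    (h : t ∈ pairModule (τ : ℂ) / pairModule (τ : ℂ)) :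
    IsQuadratic τ ∧ ∃ r u : ℤ, r ≠ 0 ∧ t = r * τ + u := by
  rw [Submodule.mem_div_iff_forall_mul_mem] at h
  obtain ⟨r, u, hru⟩ := mem_pairModule.mp (h 1 (mem_pairModule.mpr ⟨0, 1, by simp⟩))
  obtain ⟨p, q, hpq⟩ := mem_pairModule.mp (h τ (mem_pairModule.mpr ⟨1, 0, by simp⟩))
  have hr : r ≠ 0 := by
    rintro rfl
    apply ht
    rw [mul_one] at hru
    simp [← hru]
  refine ⟨⟨r, u - p, -q, hr, ?_⟩, r, u, hr, by rw [hru, mul_one]⟩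
  push_cast
  linear_combination τ * hru - hpq

lemma exists_pairModule_conjLattice (σ : ℂ ≃+* ℂ) {L : PeriodPair} {t : ℂ} (ht : t.im ≠ 0)
    (hσ : σ t = t) (htL : t ∈ L.lattice / L.lattice) :
    ∃ (α : ℂ) (s : ℍ), α ≠ 0 ∧
      (conjLattice σ L).lattice = Submodule.span ℤ {α} * pairModule (s : ℂ) ∧
      IsQuadratic s ∧ ∃ r u : ℤ, r ≠ 0 ∧ t = r * s + u := by
  obtain ⟨α, hα, s, h⟩ := exists_eq_scale_ofUpperHalfPlane (conjLattice σ L)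
  rw [lattice_scale, lattice_ofUpperHalfPlane] at h
  refine ⟨α, s, hα, h, isQuadratic_of_mem_div ht (mem_div_self_of_scale hα ?_)⟩
  rw [← h, ← hσ, map_mem_div_conjLattice]
  exact htL

/-- Main theorem of complex multiplication, in a form independent of ideal classes: an
automorphism fixing an imaginary quadratic order `ℤ + ℤ t` acts on lattices stable
under the order through multiplication by a fixed quadratic module. -/
theorem exists_lattice_conjLattice_eq (σ : ℂ ≃+* ℂ) (t : ℍ)
    (hO : pairModule (t : ℂ) * pairModule (t : ℂ) = pairModule (t : ℂ)) (hσ : σ t = t) :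
    ∃ (α : ℂ) (s : ℍ), α ≠ 0 ∧ (∃ r u : ℤ, r ≠ 0 ∧ (t : ℂ) = r * s + u) ∧
      ∀ L : PeriodPair, pairModule (t : ℂ) * L.lattice = L.lattice →
        (∀ x ∈ L.lattice, σ x = x) →
        (conjLattice σ L).lattice =
          Submodule.span ℤ {α} * (L.lattice * pairModule (s : ℂ)) := by
  set O := pairModule (t : ℂ) with hOdef
  have h1O : 1 ≤ O := one_le_pairModule _
  have htO : (t : ℂ) ∈ O := mem_pairModule.mpr ⟨1, 0, by simp⟩
  have hdivO : O / O = O := by rw [div_eq_mul_of_mul_eq h1O hO hO, hO]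
  have hσO : ∀ x ∈ O, σ x = x := by
    intro x hx
    obtain ⟨m, n, rfl⟩ := mem_pairModule.mp hx
    simp [hσ]
  have hσdiv : ∀ {L : PeriodPair}, (∀ x ∈ L.lattice / O, σ x = x) →
      (conjLattice σ L).lattice / (conjLattice σ (ofUpperHalfPlane t)).lattice =
        L.lattice / O := by
    intro L hL
    ext x
    rw [← σ.apply_symm_apply x, map_mem_div_conjLattice, lattice_ofUpperHalfPlane]
    constructor
    · intro hx
      rwa [hL _ hx]
    · intro hx
      rw [σ.apply_symm_apply] at hx
      rwa [← hL x hx, σ.symm_apply_apply]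
  obtain ⟨α, s, hα, hs, hquad, hts⟩ := exists_pairModule_conjLattice σ (L := ofUpperHalfPlane t)
    t.im_pos.ne' hσ (by rw [lattice_ofUpperHalfPlane, ← hOdef, hdivO]; exact htO)
  refine ⟨α, s, hα, hts, fun L hOL hσL => ?_⟩
  obtain ⟨a, b, c, -, habc, hbez⟩ := hquad.exists_primitive
  set M := pairModule (s : ℂ)
  set N := Submodule.span ℤ {(a : ℂ), b + a * (s : ℂ)}
  have hMN : M * N = pairModule (a * (s : ℂ)) := pairModule_mul_eq habc hbez
  have hOM : pairModule (a * (s : ℂ)) * M = M := pairModule_mul_pairModule habc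
  set J := Submodule.span ℤ {α⁻¹} * N
  have hFJ : (conjLattice σ (ofUpperHalfPlane t)).lattice * J = M * N := by
    rw [hs, mul_comm, mul_mul_mul_comm, span_singleton_inv_mul hα, one_mul, mul_comm]
  have hO' : M * N = O := by
    have hF : (conjLattice σ (ofUpperHalfPlane t)).lattice /
        (conjLattice σ (ofUpperHalfPlane t)).lattice = O := by
      rw [hσdiv, lattice_ofUpperHalfPlane, ← hOdef, hdivO]
      rwa [lattice_ofUpperHalfPlane, ← hOdef, hdivO]
    rw [← hF, div_eq_mul_of_mul_eq (O := M * N) _ hFJ, hFJ]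
    · rw [hs, hMN, mul_left_comm, hOM]
    · rw [hMN]
      exact one_le_pairModule _
  have hLdiv : L.lattice / O = L.lattice := by
    rw [div_eq_mul_of_mul_eq h1O hO hOL, mul_comm, hOL]
  have hOF : O * (conjLattice σ L).lattice = (conjLattice σ L).lattice := by
    refine le_antisymm ?_ (le_mul_of_one_le_left' h1O)
    rw [← Submodule.le_div_iff_mul_le]
    intro x hx
    rw [← hσO x hx, map_mem_div_conjLattice]
    exact Submodule.le_div_iff_mul_le.mpr hOL.le hx
  have key : (conjLattice σ L).lattice * J = L.lattice := by
    rw [← div_eq_mul_of_mul_eq h1O (hFJ.trans hO') hOF, hσdiv, hLdiv]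
    rwa [hLdiv]
  calc (conjLattice σ L).lattice
      = (conjLattice σ L).lattice * ((conjLattice σ (ofUpperHalfPlane t)).lattice * J) := by
        rw [hFJ, hO', mul_comm, hOF]
    _ = (conjLattice σ L).lattice * J * (conjLattice σ (ofUpperHalfPlane t)).lattice := by ring
    _ = Submodule.span ℤ {α} * (L.lattice * M) := by
      rw [key, hs, mul_left_comm]

lemma jInvariant_eq_of_lattice_eq_scale {L M : PeriodPair} {α : ℂ} (hα : α ≠ 0)
    (h : L.lattice = Submodule.span ℤ {α} * M.lattice) : jInvariant L = jInvariant M := by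
  rw [← lattice_scale α hα] at h
  rw [jInvariant_congr h, jInvariant_scale]

/-- The order `ℤ + ℤ t` associated with a quadratic point of the upper half plane. -/
lemma IsQuadratic.exists_order {τ : ℍ} (hτ : IsQuadratic τ) :
    ∃ t : ℍ, (∃ a : ℤ, a ≠ 0 ∧ (t : ℂ) = a * τ) ∧
      pairModule (t : ℂ) * pairModule (t : ℂ) = pairModule (t : ℂ) ∧
      pairModule (t : ℂ) * pairModule (τ : ℂ) = pairModule (τ : ℂ) := by
  obtain ⟨a, b, c, ha, habc, hbez⟩ := hτ.exists_primitive
  refine ⟨⟨a * τ, ?_⟩, ⟨a, ha.ne', rfl⟩, ?_, pairModule_mul_pairModule habc⟩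
  · simpa using mul_pos (Int.cast_pos.mpr ha) τ.im_pos
  · have := pairModule_mul_eq habc hbez
    change pairModule (a * (τ : ℂ)) * pairModule (a * (τ : ℂ)) = pairModule (a * (τ : ℂ))
    conv_lhs => rw [← this, ← mul_assoc, this, pairModule_mul_pairModule habc]
    exact this

/-- Automorphisms fixing an imaginary quadratic point commute on its modular invariant. -/
theorem jInvariant_comm {τ : ℍ} (hτ : IsQuadratic τ) {σ₁ σ₂ : ℂ ≃+* ℂ} (h₁ : σ₁ τ = τ)
    (h₂ : σ₂ τ = τ) : σ₁ (σ₂ (JPaper.jFunction τ)) = σ₂ (σ₁ (JPaper.jFunction τ)) := by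
  obtain ⟨t, ⟨a, -, hta⟩, hO, hOM⟩ := hτ.exists_order
  have h₁t : σ₁ t = t := by rw [hta, map_mul, h₁, map_intCast]
  have h₂t : σ₂ t = t := by rw [hta, map_mul, h₂, map_intCast]
  obtain ⟨α₁, s₁, hα₁, hs₁, H₁⟩ := exists_lattice_conjLattice_eq σ₁ t hO h₁t
  obtain ⟨α₂, s₂, hα₂, hs₂, H₂⟩ := exists_lattice_conjLattice_eq σ₂ t hO h₂t
  set M := ofUpperHalfPlane τ with hM
  have hfixpair : ∀ (σ : ℂ ≃+* ℂ) (z : ℂ), σ z = z → ∀ x ∈ pairModule z, σ x = x := by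
    intro σ z hz x hx
    obtain ⟨m, n, rfl⟩ := mem_pairModule.mp hx
    simp [hz]
  have hfix : ∀ (σ : ℂ ≃+* ℂ) (s : ℍ), σ t = t → (∃ r u : ℤ, r ≠ 0 ∧ (t : ℂ) = r * s + u) →
      σ s = s := by
    rintro σ s hσ ⟨r, u, hr, ht⟩
    have hr' : (r : ℂ) ≠ 0 := by exact_mod_cast hr
    rw [ht, map_add, map_mul, map_intCast, map_intCast, add_left_inj] at hσ
    exact mul_left_cancel₀ hr' hσ
  have key : ∀ {σ σ' : ℂ ≃+* ℂ} {α α' : ℂ} {s s' : ℍ}, α ≠ 0 → α' ≠ 0 → σ τ = τ → σ' τ = τ →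
      σ' t = t → (∃ r u : ℤ, r ≠ 0 ∧ (t : ℂ) = r * s + u) →
      (∀ L : PeriodPair, pairModule (t : ℂ) * L.lattice = L.lattice →
        (∀ x ∈ L.lattice, σ x = x) → (conjLattice σ L).lattice =
          Submodule.span ℤ {α} * (L.lattice * pairModule (s : ℂ))) →
      (∀ L : PeriodPair, pairModule (t : ℂ) * L.lattice = L.lattice →
        (∀ x ∈ L.lattice, σ' x = x) → (conjLattice σ' L).lattice =
          Submodule.span ℤ {α'} * (L.lattice * pairModule (s' : ℂ))) →
      ∃ P : PeriodPair, σ' (σ (JPaper.jFunction τ)) = jInvariant P ∧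
        P.lattice = M.lattice * pairModule (s : ℂ) * pairModule (s' : ℂ) := by
    intro σ σ' α α' s s' hα hα' hσ hσ' hσ't hs H H'
    have e := H M hOM (hfixpair σ τ hσ)
    set Q := scale α⁻¹ (inv_ne_zero hα) (conjLattice σ M)
    have hQ : Q.lattice = M.lattice * pairModule (s : ℂ) := by
      rw [lattice_scale, e, ← mul_assoc, span_singleton_inv_mul hα, one_mul]
    have e' := H' Q (by rw [hQ, ← mul_assoc, hM, lattice_ofUpperHalfPlane, hOM]) (by
      intro x hx
      rw [hQ] at hx
      refine Submodule.mul_induction_on hx (fun m hm n hn => ?_) (fun x y hx hy => ?_)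
      · rw [map_mul, hfixpair σ' τ hσ' m hm, hfixpair σ' s (hfix σ' s hσ't hs) n hn]
      · rw [map_add, hx, hy])
    refine ⟨scale α'⁻¹ (inv_ne_zero hα') (conjLattice σ' Q), ?_, ?_⟩
    · rw [jInvariant_scale, jInvariant_conjLattice, jInvariant_scale, jInvariant_conjLattice,
        jFunction_eq]
    · rw [lattice_scale, e', ← mul_assoc, span_singleton_inv_mul hα', one_mul, hQ]
  obtain ⟨P, hP, hPl⟩ := key hα₂ hα₁ h₂ h₁ h₁t hs₂ H₂ H₁
  obtain ⟨P', hP', hPl'⟩ := key hα₁ hα₂ h₁ h₂ h₂t hs₁ H₁ H₂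
  rw [hP, hP']
  exact jInvariant_congr (by rw [hPl, hPl', mul_right_comm])

/-- Automorphisms fixing an imaginary quadratic point map its modular invariant to the modular
invariant of an imaginary quadratic point. -/
theorem exists_isQuadratic_map_jFunction {τ : ℍ} (hτ : IsQuadratic τ) {σ : ℂ ≃+* ℂ}
    (hσ : σ τ = τ) : ∃ s : ℍ, IsQuadratic s ∧ σ (JPaper.jFunction τ) = JPaper.jFunction s := by
  obtain ⟨t, ⟨a, -, hta⟩, hO, hOM⟩ := hτ.exists_order
  have ht : σ t = t := by rw [hta, map_mul, hσ, map_intCast]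
  obtain ⟨α, s, hα, hs, hquad, -⟩ := exists_pairModule_conjLattice σ (L := ofUpperHalfPlane τ)
    t.im_pos.ne' ht (by
      rw [lattice_ofUpperHalfPlane]
      exact Submodule.le_div_iff_mul_le.mpr hOM.le (mem_pairModule.mpr ⟨1, 0, by simp⟩))
  refine ⟨s, hquad, ?_⟩
  rw [jFunction_eq, jFunction_eq, ← jInvariant_conjLattice]
  exact jInvariant_eq_of_lattice_eq_scale hα hs

/-! ### Quadratic numbers are cyclotomic -/

lemma mem_Qcyc_of_pow_eq_one {z : ℂ} {n : ℕ} (hn : 0 < n) (h : z ^ n = 1) : z ∈ JPaper.Qcyc :=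
  Subfield.subset_closure ⟨n, hn, h⟩

lemma I_mem_Qcyc : Complex.I ∈ JPaper.Qcyc :=
  mem_Qcyc_of_pow_eq_one (n := 4) (by norm_num) Complex.I_pow_four

lemma exists_sq_eq_prime (p : ℕ) (hp : p.Prime) : ∃ x ∈ JPaper.Qcyc, x ^ 2 = (p : ℂ) := by
  rcases eq_or_ne p 2 with rfl | hp2
  · obtain ⟨z, hz⟩ := IsAlgClosed.exists_pow_nat_eq Complex.I (n := 2) (by norm_num)
    have hz8 : z ^ 8 = 1 := by
      rw [show z ^ 8 = (z ^ 2) ^ 4 by ring, hz, Complex.I_pow_four]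
    have hmem := mem_Qcyc_of_pow_eq_one (by norm_num) hz8
    refine ⟨z + z⁻¹, add_mem hmem (inv_mem hmem), ?_⟩
    have hz0 : z ≠ 0 := by
      rintro rfl
      simp at hz8
    rw [add_sq, inv_pow, hz, mul_assoc, mul_inv_cancel₀ hz0, Complex.inv_I]
    push_cast
    ring
  · have : Fact p.Prime := ⟨hp⟩
    have : NeZero p := ⟨hp.ne_zero⟩
    set χ : MulChar (ZMod p) ℂ := (quadraticChar (ZMod p)).ringHomComp (Int.castRingHom ℂ)
    have hχ₂ : χ.IsQuadratic := (quadraticChar_isQuadratic (ZMod p)).comp _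
    have hχ₁ : χ ≠ 1 := (MulChar.ringHomComp_ne_one_iff (Int.cast_injective)).mpr
      (quadraticChar_ne_one (by rwa [ZMod.ringChar_zmod_n]))
    have hsq := gaussSum_sq hχ₁ hχ₂ (ZMod.isPrimitive_stdAddChar p)
    rw [ZMod.card] at hsq
    have hmem : gaussSum χ (ZMod.stdAddChar (N := p)) ∈ JPaper.Qcyc := by
      refine sum_mem fun a _ => mul_mem (intCast_mem _ _) ?_
      refine mem_Qcyc_of_pow_eq_one hp.pos ?_
      rw [← AddChar.map_nsmul_eq_pow]
      simp
    rcases hχ₂ (-1) with h | h | h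
    · exact absurd h (IsUnit.map χ isUnit_one.neg).ne_zero
    · exact ⟨_, hmem, by rw [hsq, h, one_mul]⟩
    · exact ⟨_, mul_mem I_mem_Qcyc hmem, by rw [mul_pow, hsq, h, Complex.I_sq]; ring⟩

lemma exists_sq_eq_natCast (n : ℕ) : ∃ x ∈ JPaper.Qcyc, x ^ 2 = (n : ℂ) := by
  induction n using induction_on_primes with
  | zero => exact ⟨0, zero_mem _, by simp⟩
  | one => exact ⟨1, one_mem _, by simp⟩
  | prime_mul p a hp ih =>
    obtain ⟨x, hx, hx2⟩ := exists_sq_eq_prime p hp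
    obtain ⟨y, hy, hy2⟩ := ih
    exact ⟨x * y, mul_mem hx hy, by rw [mul_pow, hx2, hy2]; push_cast; ring⟩

lemma mem_Qcyc_of_sq_eq_intCast {z : ℂ} {n : ℤ} (h : z ^ 2 = n) : z ∈ JPaper.Qcyc := by
  obtain ⟨x, hx, hx2⟩ : ∃ x ∈ JPaper.Qcyc, x ^ 2 = (n : ℂ) := by
    obtain ⟨x, hx, hx2⟩ := exists_sq_eq_natCast n.natAbs
    rcases Int.natAbs_eq n with hn | hn
    · exact ⟨x, hx, by rw [hx2, hn]; simp⟩
    · exact ⟨Complex.I * x, mul_mem I_mem_Qcyc hx, by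
        rw [mul_pow, hx2, Complex.I_sq, hn]; simp⟩
  rcases sq_eq_sq_iff_eq_or_eq_neg.mp (h.trans hx2.symm) with rfl | rfl
  · exact hx
  · exact neg_mem hx

lemma IsQuadratic.mem_Qcyc {z : ℂ} (hz : IsQuadratic z) : z ∈ JPaper.Qcyc := by
  obtain ⟨a, b, c, ha, h⟩ := hz
  have ha' : (a : ℂ) ≠ 0 := by exact_mod_cast ha
  have hsq : (2 * a * z + b) ^ 2 = ((b ^ 2 - 4 * a * c : ℤ) : ℂ) := by
    push_cast
    linear_combination 4 * a * h
  have hmem := mem_Qcyc_of_sq_eq_intCast hsq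
  have hz : z = (2 * a * z + b - b) / (2 * a) := by field_simp; ring
  rw [hz]
  exact div_mem (sub_mem hmem (intCast_mem _ _)) (mul_mem (ofNat_mem _ 2) (intCast_mem _ _))

/-! ### Special points are the imaginary quadratic points -/

/-- The element of `GL₂⁺(ℚ)` given by a matrix of positive determinant. -/
def glPosMk (A : Matrix (Fin 2) (Fin 2) ℚ) (hA : 0 < A.det) : JPaper.GL2QPos :=
  ⟨Matrix.GeneralLinearGroup.mkOfDetNeZero A hA.ne', by
    rw [Matrix.mem_glpos, Matrix.GeneralLinearGroup.val_det_apply]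
    exact hA⟩

lemma coe_glPosMk (A : Matrix (Fin 2) (Fin 2) ℚ) (hA : 0 < A.det) :
    ((glPosMk A hA : GL (Fin 2) ℚ) : Matrix (Fin 2) (Fin 2) ℚ) = A := rfl

lemma glPos_ext {g h : JPaper.GL2QPos}
    (H : ((g : GL (Fin 2) ℚ) : Matrix (Fin 2) (Fin 2) ℚ) = (h : GL (Fin 2) ℚ)) : g = h :=
  Subtype.ext (Units.ext H)

lemma coe_mul_glPos (g h : JPaper.GL2QPos) :
    (((g * h : JPaper.GL2QPos) : GL (Fin 2) ℚ) : Matrix (Fin 2) (Fin 2) ℚ) =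
      ((g : GL (Fin 2) ℚ) : Matrix (Fin 2) (Fin 2) ℚ) * (h : GL (Fin 2) ℚ) := rfl

lemma mem_center_glPos_iff {g : JPaper.GL2QPos} :
    g ∈ Subgroup.center JPaper.GL2QPos ↔ (g : GL (Fin 2) ℚ) 0 1 = 0 ∧ (g : GL (Fin 2) ℚ) 1 0 = 0 ∧
      (g : GL (Fin 2) ℚ) 0 0 = (g : GL (Fin 2) ℚ) 1 1 := by
  rw [Subgroup.mem_center_iff]
  constructor
  · intro h
    have hU := h (glPosMk !![1, 1; 0, 1] (by simp))
    have hV := h (glPosMk !![1, 0; 1, 1] (by simp))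
    have hU' := congrArg (fun x : JPaper.GL2QPos =>
      ((x : GL (Fin 2) ℚ) : Matrix (Fin 2) (Fin 2) ℚ)) hU
    have hV' := congrArg (fun x : JPaper.GL2QPos =>
      ((x : GL (Fin 2) ℚ) : Matrix (Fin 2) (Fin 2) ℚ)) hV
    simp only [coe_mul_glPos, coe_glPosMk] at hU' hV'
    have u00 := congrFun (congrFun hU' 0) 0
    have u01 := congrFun (congrFun hU' 0) 1
    have v00 := congrFun (congrFun hV' 0) 0
    simp [Matrix.mul_apply, Fin.sum_univ_two] at u00 u01 v00
    exact ⟨v00, u00, by linarith⟩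
  · rintro ⟨h01, h10, h00⟩ x
    apply glPos_ext
    rw [coe_mul_glPos, coe_mul_glPos]
    ext i j
    fin_cases i <;> fin_cases j <;>
      simp [Matrix.mul_apply, Fin.sum_univ_two, h01, h10, h00, mul_comm]

lemma toGLPosR_smul_eq_iff (g : JPaper.GL2QPos) (τ : ℍ) :
    JPaper.toGLPosR g • τ = τ ↔ (((g : GL (Fin 2) ℚ) 1 0 : ℚ) : ℂ) * (τ : ℂ) ^ 2 +
      (((g : GL (Fin 2) ℚ) 1 1 : ℚ) - ((g : GL (Fin 2) ℚ) 0 0 : ℚ)) * τ -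
        ((g : GL (Fin 2) ℚ) 0 1 : ℚ) = 0 := by
  have hdet : 0 < ((JPaper.toGLPosR g : GL (Fin 2) ℝ).det : ℝ) := (JPaper.toGLPosR g).2
  have hden := denom_ne_zero (JPaper.toGLPosR g : GL (Fin 2) ℝ) τ
  have hentry : ∀ i j, (JPaper.toGLPosR g : GL (Fin 2) ℝ) i j =
      (((g : GL (Fin 2) ℚ) i j : ℚ) : ℝ) := fun i j => rfl
  rw [← UpperHalfPlane.coe_inj, Subgroup.smul_def, coe_smul_of_det_pos hdet, div_eq_iff hden]
  simp only [num, denom, hentry, Complex.ofReal_ratCast]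
  constructor <;> intro h <;> linear_combination -h

/-- The special points are the imaginary quadratic points. -/
theorem isSpecial_iff {τ : ℍ} : JPaper.IsSpecial τ ↔ IsQuadratic τ := by
  constructor
  · rintro ⟨g, hg, hτ⟩
    rw [JPaper.gqSmul, toGLPosR_smul_eq_iff] at hτ
    have hcenter : g.out ∉ Subgroup.center JPaper.GL2QPos := by
      rw [← QuotientGroup.eq_one_iff, QuotientGroup.out_eq']
      exact hg
    rw [mem_center_glPos_iff] at hcenter
    generalize (g.out : GL (Fin 2) ℚ) 0 0 = p at hτ hcenter
    generalize (g.out : GL (Fin 2) ℚ) 0 1 = q at hτ hcenter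
    generalize (g.out : GL (Fin 2) ℚ) 1 0 = r at hτ hcenter
    generalize (g.out : GL (Fin 2) ℚ) 1 1 = u at hτ hcenter
    have hr : r ≠ 0 := by
      rintro rfl
      have him := congrArg Complex.im hτ
      have hpu : (u : ℝ) - p = 0 := by
        have h : (u : ℂ) - p = ((u - p : ℝ) : ℂ) := by push_cast; rfl
        have hq : (q : ℂ) = ((q : ℝ) : ℂ) := by push_cast; rfl
        rw [h, hq] at him
        simpa [τ.im_pos.ne', UpperHalfPlane.im_ne_zero] using him
      have hpu' : u = p := by exact_mod_cast sub_eq_zero.mp hpu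
      subst hpu'
      simp only [Rat.cast_zero, zero_mul, sub_self, zero_sub, zero_add, neg_eq_zero,
        Rat.cast_eq_zero] at hτ
      exact hcenter ⟨hτ, rfl, rfl⟩
    have hden : ∀ x : ℚ, (x.den : ℂ) * x = x.num := fun x => by
      exact_mod_cast Rat.den_mul_eq_num x
    refine ⟨r.num * q.den * (u - p).den, (u - p).num * r.den * q.den,
      -(q.num * r.den * (u - p).den), ?_, ?_⟩
    · simp [hr]
    · have h₁ := hden r
      have h₂ := hden q
      have h₃ := hden (u - p)
      push_cast at h₃ ⊢
      rw [← h₁, ← h₂, ← h₃]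
      linear_combination ((r.den : ℂ) * q.den * (u - p).den) * hτ
  · rintro ⟨a, b, c, ha, h⟩
    have hac : 0 < a * c := by
      have hre := congrArg Complex.re h
      have him := congrArg Complex.im h
      simp only [pow_two, Complex.add_re, Complex.mul_re, Complex.add_im, Complex.mul_im,
        Complex.intCast_re, Complex.intCast_im, Complex.zero_re, Complex.zero_im] at hre him
      have hy : 0 < (τ : ℂ).im := τ.im_pos
      generalize (τ : ℂ).re = x at *
      generalize (τ : ℂ).im = y at *
      have hb : 2 * a * x + b = 0 := by
        refine mul_right_cancel₀ hy.ne' ?_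
        linear_combination him
      have ha' : (a : ℝ) ≠ 0 := by exact_mod_cast ha
      have hc : (a * c : ℝ) = a ^ 2 * (x ^ 2 + y ^ 2) := by
        linear_combination a * hre - a * x * hb
      have : (0 : ℝ) < a * c := by
        rw [hc]
        positivity
      exact_mod_cast this
    set g := glPosMk !![-(b : ℚ), -(c : ℚ); (a : ℚ), 0] (by
      simp only [Matrix.det_fin_two_of]
      have : (0 : ℚ) < a * c := by exact_mod_cast hac
      linarith) with hg
    refine ⟨QuotientGroup.mk g, ?_, ?_⟩
    · rw [Ne, QuotientGroup.eq_one_iff, mem_center_glPos_iff]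
      rintro ⟨-, h10, -⟩
      have h : (a : ℚ) = 0 := h10
      exact ha (by exact_mod_cast h)
    · rw [JPaper.gqSmul, toGLPosR_smul_eq_iff]
      obtain ⟨z, hz⟩ := QuotientGroup.mk_out_eq_mul (Subgroup.center JPaper.GL2QPos) g
      obtain ⟨h01, h10, h00⟩ := mem_center_glPos_iff.mp z.2
      rw [hz]
      have e00 : ((g * z : JPaper.GL2QPos) : GL (Fin 2) ℚ) 0 0 =
          -b * (z.1 : GL (Fin 2) ℚ) 1 1 := by
        rw [coe_mul_glPos]
        simp [Matrix.mul_apply, Fin.sum_univ_two, hg, coe_glPosMk, h10, h00]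
      have e01 : ((g * z : JPaper.GL2QPos) : GL (Fin 2) ℚ) 0 1 =
          -c * (z.1 : GL (Fin 2) ℚ) 1 1 := by
        rw [coe_mul_glPos]
        simp [Matrix.mul_apply, Fin.sum_univ_two, hg, coe_glPosMk, h01]
      have e10 : ((g * z : JPaper.GL2QPos) : GL (Fin 2) ℚ) 1 0 =
          a * (z.1 : GL (Fin 2) ℚ) 1 1 := by
        rw [coe_mul_glPos]
        simp [Matrix.mul_apply, Fin.sum_univ_two, hg, coe_glPosMk, h00]
      have e11 : ((g * z : JPaper.GL2QPos) : GL (Fin 2) ℚ) 1 1 = 0 := by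
        rw [coe_mul_glPos]
        simp [Matrix.mul_apply, Fin.sum_univ_two, hg, coe_glPosMk, h01]
      rw [e00, e01, e10, e11]
      push_cast
      linear_combination ((z.1 : GL (Fin 2) ℚ) 1 1 : ℂ) * h

/-! ### Automorphisms of the complex numbers -/

section Extension

open Cardinal

lemma exists_algEquiv_of_isAlgClosed {R : Type} {K L : Type} [CommRing R] [Nontrivial R]
    [Countable R] [Field K] [Field L] [Algebra R K] [Algebra R L] [FaithfulSMul R K]
    [FaithfulSMul R L] [IsAlgClosed K] [IsAlgClosed L] (hK : ℵ₀ < #K) (hKL : #K = #L) :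
    Nonempty (K ≃ₐ[R] L) := by
  have hR : #R ≤ ℵ₀ := mk_le_aleph0
  obtain ⟨s, hs⟩ := exists_isTranscendenceBasis R K
  obtain ⟨t, ht⟩ := exists_isTranscendenceBasis R L
  have hst : #s = #t := by
    rw [← IsAlgClosed.cardinal_eq_cardinal_transcendence_basis_of_aleph0_lt' _ hs hR hK,
      ← IsAlgClosed.cardinal_eq_cardinal_transcendence_basis_of_aleph0_lt' _ ht hR (hKL ▸ hK), hKL]
  obtain ⟨e⟩ := Cardinal.eq.mp hst
  have := IsAlgClosed.isAlgClosure_of_transcendence_basis _ hs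
  have := IsAlgClosed.isAlgClosure_of_transcendence_basis _ ht
  let φ : Algebra.adjoin R (Set.range ((↑) : s → K)) ≃ₐ[R]
      Algebra.adjoin R (Set.range ((↑) : t → L)) :=
    hs.1.aevalEquiv.symm.trans ((MvPolynomial.renameEquiv R e).trans ht.1.aevalEquiv)
  refine ⟨AlgEquiv.ofRingEquiv (f := IsAlgClosure.equivOfEquiv K L φ.toRingEquiv) fun r => ?_⟩
  rw [IsScalarTower.algebraMap_apply R (Algebra.adjoin R (Set.range ((↑) : s → K))) K,
    IsAlgClosure.equivOfEquiv_algebraMap]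
  change algebraMap _ L (φ (algebraMap R _ r)) = _
  rw [φ.commutes, ← IsScalarTower.algebraMap_apply]

/-- Two embeddings of a countable ring into `ℂ` are conjugate under an automorphism of `ℂ`. -/
theorem exists_ringEquiv_comp_eq {R : Type} [CommRing R] [Nontrivial R] [Countable R]
    (f g : R →+* ℂ) (hf : Function.Injective f) (hg : Function.Injective g) :
    ∃ φ : ℂ ≃+* ℂ, ∀ r, φ (f r) = g r := by
  have key : ∀ (K L : Type) [Field K] [Field L] [IsAlgClosed K] [IsAlgClosed L] (f : R →+* K)
      (g : R →+* L), Function.Injective f → Function.Injective g → ℵ₀ < #K → #K = #L →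
      ∃ φ : K ≃+* L, ∀ r, φ (f r) = g r := by
    intro K L _ _ _ _ f g hf hg hK hKL
    let _ : Algebra R K := f.toAlgebra
    let _ : Algebra R L := g.toAlgebra
    have : FaithfulSMul R K := (faithfulSMul_iff_algebraMap_injective R K).mpr hf
    have : FaithfulSMul R L := (faithfulSMul_iff_algebraMap_injective R L).mpr hg
    obtain ⟨φ⟩ := exists_algEquiv_of_isAlgClosed (R := R) hK hKL
    exact ⟨φ.toRingEquiv, φ.commutes⟩
  exact key ℂ ℂ f g hf hg (by rw [mk_complex]; exact aleph0_lt_continuum) rfl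

end Extension

/-! ### The Galois action on singular moduli -/

lemma countable_rootsOfUnitySet : JPaper.rootsOfUnitySet.Countable := by
  refine (Algebraic.countable ℤ ℂ).mono ?_
  rintro z ⟨n, hn, hz⟩
  exact (IsIntegral.of_pow hn (hz ▸ isIntegral_one)).isAlgebraic

lemma countable_jSpecialValues : JPaper.jSpecialValues.Countable := by
  refine Set.Countable.image ?_ _
  refine Set.MapsTo.countable_of_injOn (f := fun τ : ℍ => (τ : ℂ)) (t := {x | IsAlgebraic ℤ x}) ?_
    (fun x _ y _ h => UpperHalfPlane.ext h) (Algebraic.countable ℤ ℂ)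
  intro τ hτ
  obtain ⟨a, b, c, ha, h⟩ := isSpecial_iff.mp hτ
  refine ⟨C a * X ^ 2 + C b * X + C c, fun h0 => ha ?_, by simpa using h⟩
  simpa [coeff_X, coeff_C, -map_intCast, -eq_intCast] using congrArg (coeff · 2) h0

lemma countable_subfield_closure {s : Set ℂ} (hs : s.Countable) :
    Countable (Subfield.closure s) := by
  rw [← Cardinal.mk_le_aleph0_iff]
  exact (Subfield.cardinalMk_closure_le_max s).trans (max_le hs.le_aleph0 le_rfl)

instance countable_Qcyc : Countable JPaper.Qcyc :=
  countable_subfield_closure countable_rootsOfUnitySet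

instance countable_QcycJS : Countable JPaper.QcycJS :=
  countable_subfield_closure (countable_rootsOfUnitySet.union countable_jSpecialValues)

lemma map_mem_jSpecialValues {φ : ℂ ≃+* ℂ} (hφ : ∀ x ∈ JPaper.Qcyc, φ x = x) {z : ℂ}
    (hz : z ∈ JPaper.jSpecialValues) : φ z ∈ JPaper.jSpecialValues := by
  obtain ⟨τ, hτ, rfl⟩ := hz
  have hτ' := isSpecial_iff.mp hτ
  obtain ⟨s, hs, h⟩ := exists_isQuadratic_map_jFunction hτ' (hφ τ hτ'.mem_Qcyc)
  exact ⟨s, isSpecial_iff.mpr hs, h.symm⟩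

lemma map_mem_QcycJS {φ : ℂ ≃+* ℂ} (hφ : ∀ x ∈ JPaper.Qcyc, φ x = x) {z : ℂ}
    (hz : z ∈ JPaper.QcycJS) : φ z ∈ JPaper.QcycJS := by
  have : JPaper.QcycJS ≤ JPaper.QcycJS.comap (φ : ℂ →+* ℂ) := by
    refine Subfield.closure_le.mpr ?_
    rintro x (hx | hx)
    · have hx' : x ∈ JPaper.Qcyc := Subfield.subset_closure hx
      change φ x ∈ JPaper.QcycJS
      rw [hφ x hx']
      exact JPaper.Qcyc_le_QcycJS hx'
    · exact Subfield.subset_closure (Or.inr (map_mem_jSpecialValues hφ hx))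
  exact this hz

instance countable_polynomial {R : Type} [CommRing R] [Countable R] : Countable R[X] := by
  rw [← Cardinal.mk_le_aleph0_iff]
  exact Polynomial.cardinalMk_le_max.trans (max_le Cardinal.mk_le_aleph0 le_rfl)

/-- Singular moduli are algebraic: a transcendental number has uncountably many conjugates. -/
theorem isAlgebraic_of_mem_jSpecialValues {z : ℂ} (hz : z ∈ JPaper.jSpecialValues) :
    IsAlgebraic JPaper.Qcyc z := by
  by_contra hz'
  have hsub : {y : ℂ | IsAlgebraic JPaper.Qcyc y}ᶜ ⊆ JPaper.jSpecialValues := by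
    intro y hy
    obtain ⟨φ, hφ⟩ := exists_ringEquiv_comp_eq (R := (JPaper.Qcyc)[X])
      (aeval z : (JPaper.Qcyc)[X] →ₐ[JPaper.Qcyc] ℂ).toRingHom
      (aeval y : (JPaper.Qcyc)[X] →ₐ[JPaper.Qcyc] ℂ).toRingHom
      (transcendental_iff_injective.mp hz') (transcendental_iff_injective.mp hy)
    have hφz : φ z = y := by simpa using hφ X
    have hφC : ∀ x ∈ JPaper.Qcyc, φ x = x := fun x hx => by
      have h := hφ (C ⟨x, hx⟩)
      simp only [AlgHom.toRingHom_eq_coe, RingHom.coe_coe, aeval_C] at h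
      exact h
    rw [← hφz]
    exact map_mem_jSpecialValues hφC hz
  have hcount : (Set.univ : Set ℂ).Countable :=
    ((Algebraic.countable JPaper.Qcyc ℂ).union (countable_jSpecialValues.mono hsub)).mono
      (by rw [Set.union_compl_self])
  exact not_countable_complex hcount

/-- Conjugate algebraic numbers are exchanged by an automorphism of `ℂ`. -/
lemma exists_ringEquiv_of_isRoot_minpoly {F : Subfield ℂ} [Countable F] {x y : ℂ}
    (hx : IsIntegral F x) (hy : aeval y (minpoly F x) = 0) :
    ∃ φ : ℂ ≃+* ℂ, (∀ z ∈ F, φ z = z) ∧ φ x = y := by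
  have : Fact (Irreducible (minpoly F x)) := ⟨minpoly.irreducible hx⟩
  have : Countable (AdjoinRoot (minpoly F x)) :=
    (AdjoinRoot.mk_surjective (g := minpoly F x)).countable
  obtain ⟨φ, hφ⟩ := exists_ringEquiv_comp_eq
    (AdjoinRoot.lift (algebraMap F ℂ) x (minpoly.aeval F x))
    (AdjoinRoot.lift (algebraMap F ℂ) y hy) (RingHom.injective _) (RingHom.injective _)
  refine ⟨φ, fun z hz => ?_, ?_⟩
  · exact (congrArg φ (AdjoinRoot.lift_of (minpoly.aeval F x) (x := ⟨z, hz⟩)).symm).trans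
      ((hφ (AdjoinRoot.of _ ⟨z, hz⟩)).trans (AdjoinRoot.lift_of hy))
  · exact (congrArg φ (AdjoinRoot.lift_root (minpoly.aeval F x)).symm).trans
      ((hφ (AdjoinRoot.root _)).trans (AdjoinRoot.lift_root hy))

lemma algebraMap_inclusion {F K : Subfield ℂ} (h : F ≤ K) (x : F) :
    algebraMap K ℂ (Subfield.inclusion h x) = algebraMap F ℂ x := rfl

lemma algebraMap_algebraMap (x : JPaper.Qcyc) :
    algebraMap JPaper.QcycJS ℂ (algebraMap JPaper.Qcyc JPaper.QcycJS x) =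
      algebraMap JPaper.Qcyc ℂ x :=
  algebraMap_inclusion JPaper.Qcyc_le_QcycJS x

instance isScalarTower_Qcyc_QcycJS : IsScalarTower JPaper.Qcyc JPaper.QcycJS ℂ :=
  IsScalarTower.of_algebraMap_eq fun x => (algebraMap_algebraMap x).symm

lemma isAlgebraic_of_mem_QcycJS {z : ℂ} (hz : z ∈ JPaper.QcycJS) : IsAlgebraic JPaper.Qcyc z := by
  have : JPaper.QcycJS ≤ (algebraicClosure JPaper.Qcyc ℂ).toSubfield := by
    refine Subfield.closure_le.mpr ?_
    rintro x (hx | hx)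
    · exact mem_algebraicClosure_iff.mpr (isAlgebraic_algebraMap (A := ℂ)
        (⟨x, Subfield.subset_closure hx⟩ : JPaper.Qcyc))
    · exact mem_algebraicClosure_iff.mpr (isAlgebraic_of_mem_jSpecialValues hx)
  exact mem_algebraicClosure_iff.mp (this hz)

instance isAlgebraic_QcycJS : Algebra.IsAlgebraic JPaper.Qcyc JPaper.QcycJS where
  isAlgebraic x := (isAlgebraic_algebraMap_iff (A := ℂ) Subtype.val_injective).mp
    (isAlgebraic_of_mem_QcycJS x.2)

instance normal_QcycJS : Normal JPaper.Qcyc JPaper.QcycJS := by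
  rw [normal_iff]
  intro x
  have hx : IsIntegral JPaper.Qcyc x := Algebra.IsIntegral.isIntegral x
  refine ⟨hx, Splits.of_splits_map (algebraMap JPaper.QcycJS ℂ) (IsAlgClosed.splits _) ?_⟩
  intro y hy
  rw [Polynomial.map_map, ← IsScalarTower.algebraMap_eq,
    ← minpoly.algebraMap_eq (algebraMap JPaper.QcycJS ℂ).injective x] at hy
  have hy' : aeval y (minpoly JPaper.Qcyc (algebraMap JPaper.QcycJS ℂ x)) = 0 := by
    rw [aeval_def, ← eval_map]
    exact (mem_roots'.mp hy).2
  obtain ⟨φ, hφ, rfl⟩ := exists_ringEquiv_of_isRoot_minpoly (hx.map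
    (IsScalarTower.toAlgHom JPaper.Qcyc JPaper.QcycJS ℂ)) hy'
  exact ⟨⟨_, map_mem_QcycJS hφ x.2⟩, rfl⟩

lemma exists_ringEquiv_extending (σ : JPaper.QcycJS ≃ₐ[JPaper.Qcyc] JPaper.QcycJS) :
    ∃ φ : ℂ ≃+* ℂ, (∀ x ∈ JPaper.Qcyc, φ x = x) ∧ ∀ x : JPaper.QcycJS, φ x = σ x := by
  obtain ⟨φ, hφ⟩ := exists_ringEquiv_comp_eq (algebraMap JPaper.QcycJS ℂ)
    ((algebraMap JPaper.QcycJS ℂ).comp (σ : JPaper.QcycJS →+* JPaper.QcycJS))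
    (RingHom.injective _) (RingHom.injective _)
  refine ⟨φ, fun x hx => ?_, hφ⟩
  have := hφ (algebraMap JPaper.Qcyc JPaper.QcycJS ⟨x, hx⟩)
  rw [RingHom.comp_apply] at this
  erw [σ.commutes] at this
  exact this

end SingularModuli

/-- Lemma `lem abelian`: the extension `ℚ^cyc(j(S)) / ℚ^cyc` is abelian,
where `j(S)` is the set of singular moduli (the `j`-invariants of the CM points of the
upper half plane) and `ℚ^cyc = ℚ(all roots of unity)`. -/
theorem QcycJS_abelian_over_Qcyc :
    IsGalois ↥JPaper.Qcyc ↥JPaper.QcycJS ∧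
      ∀ σ τ : (↥JPaper.QcycJS ≃ₐ[↥JPaper.Qcyc] ↥JPaper.QcycJS), σ * τ = τ * σ := by
  refine ⟨⟨⟩, fun σ τ => ?_⟩
  obtain ⟨φ, hφ, hφσ⟩ := SingularModuli.exists_ringEquiv_extending σ
  obtain ⟨ψ, hψ, hψτ⟩ := SingularModuli.exists_ringEquiv_extending τ
  have hcomm : Set.EqOn ((φ : ℂ →+* ℂ).comp (ψ : ℂ →+* ℂ)) ((ψ : ℂ →+* ℂ).comp (φ : ℂ →+* ℂ))
      JPaper.QcycJS := by
    refine RingHom.eqOn_field_closure ?_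
    rintro x (hx | ⟨s, hs, rfl⟩)
    · have hx' : x ∈ JPaper.Qcyc := Subfield.subset_closure hx
      simp [hφ x hx', hψ x hx']
    · have hs' := SingularModuli.isSpecial_iff.mp hs
      exact SingularModuli.jInvariant_comm hs' (hφ s hs'.mem_Qcyc) (hψ s hs'.mem_Qcyc)
  ext x
  have h := hcomm x.2
  simp only [RingHom.comp_apply, RingHom.coe_coe, hφσ, hψτ] at h
  exact h
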